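/- Let G be a cyclically 4-edge-connected cubic simple graph containing no cycle of length 3 or 4, and let v1v2v3v4v5 be a 5-cycle in G with ui the third neighbor of vi outside the cycle for each i; assume u1, ..., u5 are pairwise distinct, none of them lies on the cycle, and no two of them are adjacent in G. For each 2-element subset {j, k} of {1, ..., 5} let G_{j,k} be the graph obtained from G by deleting v1, ..., v5, adding a new vertex w adjacent to the three vertices u_m with m ∉ {j, k}, and adding the edge u_j u_k. Then ν(G) ≥ (15/4) · min over all ten 2-element subsets {j,k} of ν(G_{j,k}). -/

import Mathlib

namespace CiDC

open SimpleGraph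

/-- A circuit in a graph: a connected 2-regular subgraph. -/
def IsCircuit {V : Type*} {G : SimpleGraph V} (H : G.Subgraph) : Prop :=
  H.Connected ∧ ∀ v ∈ H.verts, (H.neighborSet v).ncard = 2

open scoped Classical in
/-- A circuit double cover: a multiset of circuits covering every edge exactly twice
(counted with multiplicity). -/
def IsCiDC {V : Type*} (G : SimpleGraph V) (C : Multiset G.Subgraph) : Prop :=
  (∀ H ∈ C, IsCircuit H) ∧ ∀ e ∈ G.edgeSet, C.countP (fun H => e ∈ H.edgeSet) = 2

/-- ν(G): the number of circuit double covers of `G`. -/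
noncomputable def nu {V : Type*} (G : SimpleGraph V) : ℕ :=
  {C : Multiset G.Subgraph | IsCiDC G C}.ncard

/-- A cubic graph: every vertex has degree 3. -/
def IsCubic {V : Type*} (G : SimpleGraph V) : Prop :=
  ∀ v : V, (G.neighborSet v).ncard = 3



/-- The set of edges of `G` between `S` and its complement. -/
def edgeCutOf {V : Type*} (G : SimpleGraph V) (S : Set V) : Set (Sym2 V) :=
  {e | ∃ u v : V, e = s(u, v) ∧ G.Adj u v ∧ u ∈ S ∧ v ∉ S}

/-- An edge cut: a nonempty set of edges of the form `E(S, V \ S)`. -/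
def IsEdgeCut {V : Type*} (G : SimpleGraph V) (F : Set (Sym2 V)) : Prop :=
  F.Nonempty ∧ ∃ S : Set V, F = edgeCutOf G S

/-- A set of edges is circuit-separating if after its removal at least two of the
resulting components contain a circuit. -/
def CircuitSeparating {V : Type*} (G : SimpleGraph V) (F : Set (Sym2 V)) : Prop :=
  ∃ H₁ H₂ : (G.deleteEdges F).Subgraph,
    IsCircuit H₁ ∧ IsCircuit H₂ ∧
      ∃ x ∈ H₁.verts, ∃ y ∈ H₂.verts, ¬ (G.deleteEdges F).Reachable x y

/-- Cyclically 4-edge-connected: every circuit-separating edge cut has size at least 4. -/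
def CyclicallyFourEdgeConnected {V : Type*} (G : SimpleGraph V) : Prop :=
  ∀ F : Set (Sym2 V), IsEdgeCut G F → CircuitSeparating G F → 4 ≤ F.ncard

/-- 2-edge-connected: connected and bridgeless. -/
def TwoEdgeConnected {V : Type*} (G : SimpleGraph V) : Prop :=
  G.Connected ∧ ∀ e : Sym2 V, ¬ G.IsBridge e

/-- 3-edge-connected: connected, and still connected after deleting any ≤ 2 edges. -/
def ThreeEdgeConnected {V : Type*} (G : SimpleGraph V) : Prop :=
  G.Connected ∧ ∀ F : Set (Sym2 V), F.ncard ≤ 2 → (G.deleteEdges F).Connected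



/-! ### Part A: circuit double covers as symmetric bit functions on darts -/

section PartA

/-- The index of the corner at a vertex determined by an outgoing dart `y` and a bit. -/
def cor (y : Fin 3) (b : Bool) : Fin 3 := if b then y + 1 else y + 2

lemma cor_ne (y : Fin 3) (b : Bool) : y ≠ cor y b := by revert y b; decide
lemma cor_exists (y c : Fin 3) (h : y ≠ c) : ∃ b, cor y b = c := by revert y c; decide
lemma cor_inj (y : Fin 3) (b b' : Bool) (h : cor y b = cor y b') : b = b' := by
  revert y b b'; decide
lemma fin3_succ_ne (c : Fin 3) : c + 1 ≠ c := by revert c; decide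
lemma fin3_third (c c1 : Fin 3) (h : ∀ y, y ≠ c → y ≠ c1) : c = c1 := by
  revert c c1; decide

/-- Elementary link between corners, through a dart. -/
def CRel {Z : Type*} (op : Z × Fin 3 → Z × Fin 3) (β : Z × Fin 3 → Bool)
    (p q : Z × Fin 3) : Prop :=
  ∃ x y b, p = (x, cor y b) ∧ q = ((op (x, y)).1, cor (op (x, y)).2 (b ^^ β (x, y)))

/-- Corners on the same closed walk. -/
def CEq {Z : Type*} (op : Z × Fin 3 → Z × Fin 3) (β : Z × Fin 3 → Bool) :
    Z × Fin 3 → Z × Fin 3 → Prop := Relation.EqvGen (CRel op β)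

/-- All closed walks are circuits. -/
def Valid {Z : Type*} (op : Z × Fin 3 → Z × Fin 3) (β : Z × Fin 3 → Bool) : Prop :=
  ∀ p q, CEq op β p q → p.1 = q.1 → p = q

variable {Z W : Type*} {op : Z × Fin 3 → Z × Fin 3} {β β' : Z × Fin 3 → Bool}

lemma CEq.refl (p) : CEq op β p p := Relation.EqvGen.refl p
lemma CEq.symm {p q} (h : CEq op β p q) : CEq op β q p := Relation.EqvGen.symm _ _ h
lemma CEq.trans {p q r} (h : CEq op β p q) (h' : CEq op β q r) : CEq op β p r :=
  Relation.EqvGen.trans _ _ _ h h'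
lemma CEq.link (x y b) : CEq op β (x, cor y b)
    ((op (x, y)).1, cor (op (x, y)).2 (b ^^ β (x, y))) :=
  Relation.EqvGen.rel _ _ ⟨x, y, b, rfl, rfl⟩

/-- A rotation system `op` describes the cubic graph `H`. -/
structure Model (H : SimpleGraph W) (e : Z ≃ W) (op : Z × Fin 3 → Z × Fin 3) : Prop where
  invol : ∀ d, op (op d) = d
  adj : ∀ x x', H.Adj (e x) (e x') ↔ ∃ y, (op (x, y)).1 = x'
  inj : ∀ x y y', (op (x, y)).1 = (op (x, y')).1 → y = y'

variable {H : SimpleGraph W} {e : Z ≃ W}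

/-- The subgraph traced by a corner. -/
def circ (M : Model H e op) (β : Z × Fin 3 → Bool) (p : Z × Fin 3) : H.Subgraph where
  verts := {w | ∃ c, CEq op β (e.symm w, c) p}
  Adj w w' := ∃ c y, CEq op β (e.symm w, c) p ∧ y ≠ c ∧ (op (e.symm w, y)).1 = e.symm w'
  adj_sub := by
    rintro w w' ⟨c, y, h, hy, h'⟩
    have := (M.adj (e.symm w) (e.symm w')).2 ⟨y, h'⟩
    simpa using this
  edge_vert := by
    rintro w w' ⟨c, y, h, hy, h'⟩
    exact ⟨c, h⟩
  symm := by
    constructor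
    rintro w w' ⟨c, y, h, hy, h'⟩
    obtain ⟨b, rfl⟩ := cor_exists y c hy
    have hl := CEq.link (op := op) (β := β) (e.symm w) y b
    rw [h'] at hl
    refine ⟨_, (op (e.symm w, y)).2, hl.symm.trans h, cor_ne _ _, ?_⟩
    rw [← h']
    have := M.invol (e.symm w, y)
    rw [show ((op (e.symm w, y)).1, (op (e.symm w, y)).2) = op (e.symm w, y) from rfl, this]

lemma circ_adj (M : Model H e op) (p x x') : (circ M β p).Adj (e x) (e x') ↔
    ∃ c y, CEq op β (x, c) p ∧ y ≠ c ∧ (op (x, y)).1 = x' := by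
  simp [circ]

lemma circ_verts (M : Model H e op) (p x) : e x ∈ (circ M β p).verts ↔
    ∃ c, CEq op β (x, c) p := by
  simp [circ]

lemma circ_adj' (M : Model H e op) (p x y) : (circ M β p).Adj (e x) (e (op (x, y)).1) ↔
    ∃ c, CEq op β (x, c) p ∧ y ≠ c := by
  rw [circ_adj]
  constructor
  · rintro ⟨c, y', h, hy, h'⟩
    have := M.inj _ _ _ h'
    subst this
    exact ⟨c, h, hy⟩
  · rintro ⟨c, h, hy⟩
    exact ⟨c, y, h, hy, rfl⟩

lemma circ_congr (M : Model H e op) {p q} (h : CEq op β p q) : circ M β p = circ M β q := by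
  ext w w'
  · simp only [circ, Set.mem_ofPred_eq]
    exact ⟨fun ⟨c, hc⟩ => ⟨c, hc.trans h⟩, fun ⟨c, hc⟩ => ⟨c, hc.trans h.symm⟩⟩
  · simp only [circ]
    exact ⟨fun ⟨c, y, hc, h'⟩ => ⟨c, y, hc.trans h, h'⟩,
      fun ⟨c, y, hc, h'⟩ => ⟨c, y, hc.trans h.symm, h'⟩⟩

lemma circ_nbr (M : Model H e op) (hv : Valid op β) {p x c} (h : CEq op β (x, c) p) :
    (circ M β p).neighborSet (e x) = (fun y => e (op (x, y)).1) '' {y | y ≠ c} := by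
  ext w
  obtain ⟨x', rfl⟩ := e.surjective w
  simp only [Subgraph.mem_neighborSet, circ_adj, Set.mem_image, Set.mem_ofPred_eq,
    EmbeddingLike.apply_eq_iff_eq]
  constructor
  · rintro ⟨c', y, h1, h2, h3⟩
    have := hv _ _ (h1.trans h.symm) rfl
    simp only [Prod.mk.injEq, true_and] at this
    subst this
    exact ⟨y, h2, h3⟩
  · rintro ⟨y, h2, h3⟩
    exact ⟨c, y, h, h2, h3⟩

lemma fin3_ncard (c : Fin 3) : {y : Fin 3 | y ≠ c}.ncard = 2 := by
  rw [Set.ncard_eq_toFinset_card']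
  revert c; decide

lemma circ_conn (M : Model H e op) (p : Z × Fin 3) : (circ M β p).Connected := by
  have key : ∀ q q', CEq op β q q' → ∀ (h : CEq op β q p) (h' : CEq op β q' p),
      (circ M β p).coe.Reachable ⟨e q.1, (circ_verts M p q.1).2 ⟨q.2, h⟩⟩
        ⟨e q'.1, (circ_verts M p q'.1).2 ⟨q'.2, h'⟩⟩ := by
    intro q q' hqq
    induction hqq with
    | rel q q' hr =>
      intro h h'
      obtain ⟨x, y, b, rfl, rfl⟩ := hr
      apply Adj.reachable
      rw [Subgraph.coe_adj]
      exact (circ_adj' M p x y).2 ⟨_, h, cor_ne _ _⟩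
    | refl q => intro h h'; exact Reachable.refl _
    | symm q q' _ ih => intro h h'; exact (ih h' h).symm
    | trans a b c h1 _ ih1 ih2 =>
      intro h h'
      have hb := (CEq.symm h1).trans h
      exact (ih1 h hb).trans (ih2 hb h')
  rw [Subgraph.connected_iff]
  refine ⟨?_, ⟨e p.1, (circ_verts M p p.1).2 ⟨p.2, CEq.refl _⟩⟩⟩
  rw [Subgraph.preconnected_iff]
  rintro ⟨w, hw⟩ ⟨w', hw'⟩
  obtain ⟨x, rfl⟩ := e.surjective w
  obtain ⟨x', rfl⟩ := e.surjective w'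
  obtain ⟨c, hc⟩ := (circ_verts M p x).1 hw
  obtain ⟨c', hc'⟩ := (circ_verts M p x').1 hw'
  exact key _ _ (hc.trans hc'.symm) hc hc'

lemma circ_isCircuit (M : Model H e op) (hv : Valid op β) (p : Z × Fin 3) :
    IsCircuit (circ M β p) := by
  refine ⟨circ_conn M p, ?_⟩
  intro w hw
  obtain ⟨x, rfl⟩ := e.surjective w
  obtain ⟨c, hc⟩ := (circ_verts M p x).1 hw
  rw [circ_nbr M hv hc, Set.ncard_image_of_injective, fin3_ncard]
  intro y y' h
  exact M.inj _ _ _ (e.injective h)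

lemma circ_inj (M : Model H e op) (hv : Valid op β) {x c c'}
    (h : circ M β (x, c) = circ M β (x, c')) : c = c' := by
  by_contra hne
  have h1 : (circ M β (x, c')).Adj (e x) (e (op (x, c)).1) :=
    (circ_adj' M _ _ _).2 ⟨c', CEq.refl _, hne⟩
  rw [← h, circ_adj'] at h1
  obtain ⟨c1, h1, h2⟩ := h1
  have := hv _ _ h1 rfl
  simp only [Prod.mk.injEq, true_and] at this
  exact h2 this.symm

open scoped Classical in
/-- The double cover of a bit function. -/
noncomputable def cover [Fintype Z] (M : Model H e op) (β : Z × Fin 3 → Bool) :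
    Multiset H.Subgraph := (Finset.univ.image (circ M β)).val

lemma mem_cover [Fintype Z] (M : Model H e op) (K : H.Subgraph) :
    K ∈ cover M β ↔ ∃ p, circ M β p = K := by
  simp [cover]

lemma cover_isCiDC [Fintype Z] (M : Model H e op) (hv : Valid op β) :
    IsCiDC H (cover M β) := by
  classical
  refine ⟨?_, ?_⟩
  · intro K hK
    obtain ⟨p, rfl⟩ := (mem_cover M K).1 hK
    exact circ_isCircuit M hv p
  · intro ed hed
    induction ed using Sym2.ind with
    | _ w w' =>
    obtain ⟨x, rfl⟩ := e.surjective w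
    obtain ⟨x', rfl⟩ := e.surjective w'
    rw [mem_edgeSet, M.adj] at hed
    obtain ⟨y, rfl⟩ := hed
    have : (Finset.univ.image (circ M β)).filter
        (fun K => s(e x, e (op (x, y)).1) ∈ K.edgeSet) =
        {circ M β (x, cor y false), circ M β (x, cor y true)} := by
      ext K
      simp only [Finset.mem_filter, Finset.mem_image, Finset.mem_univ, true_and,
        Subgraph.mem_edgeSet, Finset.mem_insert, Finset.mem_singleton]
      constructor
      · rintro ⟨⟨p, rfl⟩, h⟩
        rw [circ_adj'] at h
        obtain ⟨c, h, hy⟩ := h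
        obtain ⟨b, rfl⟩ := cor_exists y c hy
        cases b
        · exact Or.inl (circ_congr M h.symm)
        · exact Or.inr (circ_congr M h.symm)
      · rintro (rfl | rfl)
        · exact ⟨⟨_, rfl⟩, (circ_adj' M _ _ _).2 ⟨_, CEq.refl _, cor_ne _ _⟩⟩
        · exact ⟨⟨_, rfl⟩, (circ_adj' M _ _ _).2 ⟨_, CEq.refl _, cor_ne _ _⟩⟩
    have h2 : (({circ M β (x, cor y false), circ M β (x, cor y true)} :
        Finset H.Subgraph)).card = 2 := by
      apply Finset.card_pair
      intro h
      have := cor_inj _ _ _ (circ_inj M hv h)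
      simp at this
    rw [← this, Finset.card_def, Finset.filter_val, ← Multiset.countP_eq_card_filter] at h2
    unfold cover
    convert h2

lemma cover_inj [Fintype Z] (M : Model H e op) (hv : Valid op β) (hv' : Valid op β')
    (h : cover M β = cover M β') : β = β' := by
  have key : ∀ x c, circ M β (x, c) = circ M β' (x, c) := by
    intro x c
    have : circ M β (x, c) ∈ cover M β' := by
      rw [← h, mem_cover]; exact ⟨_, rfl⟩
    obtain ⟨q, hq⟩ := (mem_cover M _).1 this
    have h1 : ∀ y, y ≠ c → ∃ c1, CEq op β' (x, c1) q ∧ y ≠ c1 := by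
      intro y hy
      rw [← circ_adj' M, hq, circ_adj']
      exact ⟨c, CEq.refl _, hy⟩
    obtain ⟨c1, h2, _⟩ := h1 (c + 1) (fin3_succ_ne c)
    have : c = c1 := by
      apply fin3_third
      intro y hy
      obtain ⟨c2, h3, h4⟩ := h1 y hy
      have := hv' _ _ (h3.trans h2.symm) rfl
      simp only [Prod.mk.injEq, true_and] at this
      rwa [← this]
    subst this
    rw [← hq, circ_congr M h2]
  funext ⟨x, y⟩
  have h1 := circ_congr M (CEq.link (op := op) (β := β) x y false)
  have h2 := circ_congr M (CEq.link (op := op) (β := β') x y false)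
  rw [← key, ← key, h1] at h2
  have := cor_inj _ _ _ (circ_inj M hv h2)
  simpa using this


lemma countP_two {α : Type*} (C : Multiset α) (a q1 q2 : α → Prop) [DecidablePred a]
    [DecidablePred q1] [DecidablePred q2]
    (h : ∀ K ∈ C, (a K ↔ q1 K ∨ q2 K) ∧ ¬ (q1 K ∧ q2 K)) :
    C.countP a = C.countP q1 + C.countP q2 := by
  induction C using Multiset.induction with
  | empty => simp
  | cons K C ih =>
    have ih := ih (fun K hK => h K (Multiset.mem_cons_of_mem hK))
    have hK := h K (Multiset.mem_cons_self _ _)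
    rw [Multiset.countP_cons, Multiset.countP_cons, Multiset.countP_cons, ih]
    by_cases h1 : q1 K <;> by_cases h2 : q2 K <;> simp_all <;> omega

/-- `K` passes through `x` using the corner `c`. -/
def Pass (e : Z ≃ W) (op : Z × Fin 3 → Z × Fin 3) (K : H.Subgraph) (x : Z) (c : Fin 3) : Prop :=
  ∀ y, K.Adj (e x) (e (op (x, y)).1) ↔ y ≠ c

lemma Pass.inj {K : H.Subgraph} {x c c'} (h : Pass e op K x c) (h' : Pass e op K x c') :
    c = c' := by
  have h1 := h c
  have h2 := h' c
  simp only [ne_eq, not_true_eq_false, iff_false] at h1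
  by_contra hne
  exact h1 (h2.2 hne)

lemma fin3_subset (s : Finset (Fin 3)) (h : s.card = 2) : ∃ c, ∀ y, y ∈ s ↔ y ≠ c := by
  revert s; decide

lemma exists_pass (M : Model H e op) {K : H.Subgraph} (hK : IsCircuit K) {x : Z}
    (hx : e x ∈ K.verts) : ∃ c, Pass e op K x c := by
  classical
  have h2 := hK.2 _ hx
  have : K.neighborSet (e x) = (fun y => e (op (x, y)).1) ''
      {y | K.Adj (e x) (e (op (x, y)).1)} := by
    ext w
    obtain ⟨x', rfl⟩ := e.surjective w
    simp only [Subgraph.mem_neighborSet, Set.mem_image, Set.mem_ofPred_eq,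
      EmbeddingLike.apply_eq_iff_eq]
    constructor
    · intro h
      obtain ⟨y, rfl⟩ := (M.adj _ _).1 (K.adj_sub h)
      exact ⟨y, h, rfl⟩
    · rintro ⟨y, h, rfl⟩
      exact h
  rw [this, Set.ncard_image_of_injective, Set.ncard_eq_toFinset_card'] at h2
  · obtain ⟨c, hc⟩ := fin3_subset _ h2
    refine ⟨c, fun y => ?_⟩
    rw [← hc]
    simp
  · intro y y' h
    exact M.inj _ _ _ (e.injective h)

open scoped Classical in
lemma pass_countP (M : Model H e op) {C : Multiset H.Subgraph} (hC : IsCiDC H C) (x : Z)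
    (c : Fin 3) : C.countP (fun K => Pass e op K x c) = 1 := by
  have key : ∀ y c1 c2 : Fin 3, (∀ c, y ≠ c ↔ c = c1 ∨ c = c2) → c1 ≠ c2 →
      C.countP (fun K => Pass e op K x c1) + C.countP (fun K => Pass e op K x c2) = 2 := by
    intro y c1 c2 hy hne
    rw [← countP_two C (fun K => s(e x, e (op (x, y)).1) ∈ K.edgeSet)]
    · have := hC.2 s(e x, e (op (x, y)).1) (by
        rw [mem_edgeSet, M.adj]; exact ⟨y, rfl⟩)
      convert this
    · intro K hK
      refine ⟨?_, fun ⟨h1, h2⟩ => hne (h1.inj h2)⟩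
      rw [Subgraph.mem_edgeSet]
      constructor
      · intro h
        obtain ⟨c, hc⟩ := exists_pass M (hC.1 K hK) (K.edge_vert h)
        rcases (hy c).1 ((hc y).1 h) with rfl | rfl
        · exact Or.inl hc
        · exact Or.inr hc
      · rintro (h | h)
        · exact (h y).2 ((hy c1).2 (Or.inl rfl))
        · exact (h y).2 ((hy c2).2 (Or.inr rfl))
  have h0 := key 0 1 2 (by decide) (by decide)
  have h1 := key 1 0 2 (by decide) (by decide)
  have h2 := key 2 0 1 (by decide) (by decide)
  have : c = 0 ∨ c = 1 ∨ c = 2 := by fin_cases c <;> simp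
  rcases this with rfl | rfl | rfl <;> omega

lemma pass_unique (M : Model H e op) {C : Multiset H.Subgraph} (hC : IsCiDC H C) (x : Z)
    (c : Fin 3) : ∃ K, K ∈ C ∧ Pass e op K x c ∧ ∀ K' ∈ C, Pass e op K' x c → K' = K := by
  classical
  have h := pass_countP M hC x c
  rw [Multiset.countP_eq_card_filter, Multiset.card_eq_one] at h
  obtain ⟨K, hK⟩ := h
  have hm : K ∈ C.filter (fun K => Pass e op K x c) := by rw [hK]; simp
  rw [Multiset.mem_filter] at hm
  refine ⟨K, hm.1, hm.2, fun K' h1 h2 => ?_⟩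
  have : K' ∈ C.filter (fun K => Pass e op K x c) := Multiset.mem_filter.2 ⟨h1, h2⟩
  rw [hK] at this
  simpa using this

lemma exists_vert {K : H.Subgraph} (hK : IsCircuit K) (e : Z ≃ W) : ∃ x, e x ∈ K.verts := by
  obtain ⟨w, hw⟩ := (Subgraph.connected_iff.1 hK.1).2
  exact ⟨e.symm w, by simpa using hw⟩

lemma cidc_nodup (M : Model H e op) {C : Multiset H.Subgraph} (hC : IsCiDC H C) :
    C.Nodup := by
  classical
  rw [Multiset.nodup_iff_count_le_one]
  intro K
  by_cases hK : K ∈ C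
  · obtain ⟨x, hx⟩ := exists_vert (hC.1 K hK) e
    obtain ⟨c, hc⟩ := exists_pass M (hC.1 K hK) hx
    have h := pass_countP M hC x c
    rw [Multiset.countP_eq_card_filter] at h
    rw [← h, ← Multiset.count_filter_of_pos (p := fun K => Pass e op K x c) hc]
    exact Multiset.count_le_card _ _
  · rw [Multiset.count_eq_zero_of_notMem hK]; omega

lemma cover_surj [Fintype Z] (M : Model H e op) {C : Multiset H.Subgraph} (hC : IsCiDC H C) :
    ∃ β, (∀ d, β (op d) = β d) ∧ Valid op β ∧ cover M β = C := by
  classical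
  choose h hmem hpass huniq using fun p : Z × Fin 3 => pass_unique M hC p.1 p.2
  set β : Z × Fin 3 → Bool := fun d => decide (h (d.1, cor d.2 false) ≠
    h ((op d).1, cor (op d).2 false)) with hβ
  have hne : ∀ x c c', h (x, c) = h (x, c') → c = c' := by
    intro x c c' heq
    have h1 := hpass (x, c)
    rw [heq] at h1
    exact h1.inj (hpass (x, c'))
  have hex : ∀ x y b, ∃ b', h ((op (x, y)).1, cor (op (x, y)).2 b) = h (x, cor y b') := by
    intro x y b
    have h1 := (hpass ((op (x, y)).1, cor (op (x, y)).2 b) (op (x, y)).2).2 (cor_ne _ _)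
    have h2 := M.invol (x, y)
    simp only [Prod.mk.eta, h2] at h1
    have h1 := h1.symm
    obtain ⟨c, hc⟩ := exists_pass M (hC.1 _ (hmem _)) (Subgraph.edge_vert _ h1)
    have hyc := (hc y).1 h1
    obtain ⟨b', rfl⟩ := cor_exists y c hyc
    exact ⟨b', huniq (x, cor y b') _ (hmem _) hc⟩
  have hlink : ∀ x y b, h (x, cor y b) =
      h ((op (x, y)).1, cor (op (x, y)).2 (b ^^ β (x, y))) := by
    intro x y b
    have n1 : h (x, cor y false) ≠ h (x, cor y true) := fun hh => by
      have := cor_inj _ _ _ (hne _ _ _ hh); simp at this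
    have n2 : h ((op (x, y)).1, cor (op (x, y)).2 false) ≠
        h ((op (x, y)).1, cor (op (x, y)).2 true) := fun hh => by
      have := cor_inj _ _ _ (hne _ _ _ hh); simp at this
    have e0 := hex x y false
    have e1 := hex x y true
    simp only [Bool.exists_bool] at e0 e1
    by_cases hh : h (x, cor y false) = h ((op (x, y)).1, cor (op (x, y)).2 false)
    · have hb : β (x, y) = false := by simp [hβ, hh]
      rw [hb]
      cases b
      · simpa using hh
      · simp only [Bool.xor_false]
        rcases e1 with e1 | e1
        · exact absurd (hh.symm.trans e1.symm) n2
        · exact e1.symm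
    · have hb : β (x, y) = true := by simp [hβ, hh]
      rw [hb]
      have e0' := e0.resolve_left (fun h' => hh h'.symm)
      cases b
      · simp only [Bool.false_bne]
        rcases e1 with e1 | e1
        · simpa using e1.symm
        · exact absurd (e0'.trans e1.symm) n2
      · simpa using e0'.symm
  have hcongr : ∀ p q, CEq op β p q → h p = h q := by
    intro p q hpq
    induction hpq with
    | rel p q hr =>
      obtain ⟨x, y, b, rfl, rfl⟩ := hr
      exact hlink x y b
    | refl p => rfl
    | symm p q _ ih => exact ih.symm
    | trans a b c _ _ ih1 ih2 => exact ih1.trans ih2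
  have hvalid : Valid op β := by
    rintro ⟨x, c⟩ ⟨x', c'⟩ hpq hx
    simp only at hx
    subst hx
    rw [hne x c c' (hcongr _ _ hpq)]
  have hverts : ∀ p x, e x ∈ (h p).verts → ∃ c, CEq op β (x, c) p := by
    intro p x hx
    have hp : e p.1 ∈ (h p).verts :=
      (h p).edge_vert ((hpass p (p.2 + 1)).2 (fin3_succ_ne _))
    have hreach := ((hC.1 _ (hmem p)).1).preconnected.coe ⟨e p.1, hp⟩ ⟨e x, hx⟩
    have key : ∀ w w' : (h p).verts, (h p).coe.Reachable w w' →
        (∃ c, CEq op β (e.symm w, c) p) → (∃ c, CEq op β (e.symm w', c) p) := by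
      rintro w w' ⟨wk⟩
      induction wk with
      | nil => exact id
      | @cons w1 w2 w3 hadj _ ih =>
        rintro ⟨c, hc⟩
        apply ih
        rw [Subgraph.coe_adj] at hadj
        have hK := hcongr _ _ hc
        have hQ := hpass (e.symm w1, c)
        rw [hK] at hQ
        obtain ⟨y, hy⟩ := (M.adj (e.symm w1) (e.symm w2)).1
          (by simpa using (h p).adj_sub hadj)
        have hyc := (hQ y).1 (by rw [hy]; simpa using hadj)
        obtain ⟨b, rfl⟩ := cor_exists y c hyc
        have := CEq.link (op := op) (β := β) (e.symm w1) y b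
        rw [hy] at this
        exact ⟨_, this.symm.trans hc⟩
    have := key _ _ hreach ⟨p.2, by simpa using CEq.refl _⟩
    simpa using this
  have hcirc : ∀ p, circ M β p = h p := by
    intro p
    ext w w'
    · obtain ⟨x, rfl⟩ := e.surjective w
      rw [circ_verts]
      refine ⟨?_, hverts p x⟩
      rintro ⟨c, hc⟩
      rw [← hcongr _ _ hc]
      exact Subgraph.edge_vert _ ((hpass (x, c) (c + 1)).2 (fin3_succ_ne _))
    · obtain ⟨x, rfl⟩ := e.surjective w
      obtain ⟨x', rfl⟩ := e.surjective w'
      rw [circ_adj]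
      constructor
      · rintro ⟨c, y, hc, hy, rfl⟩
        rw [← hcongr _ _ hc]
        exact (hpass (x, c) y).2 hy
      · intro hadj
        obtain ⟨c, hc⟩ := hverts p x (Subgraph.edge_vert _ hadj)
        obtain ⟨y, rfl⟩ := (M.adj _ _).1 (Subgraph.adj_sub _ hadj)
        have hQ := hpass (x, c)
        rw [hcongr _ _ hc] at hQ
        exact ⟨c, y, hc, (hQ y).1 hadj, rfl⟩
  refine ⟨β, ?_, hvalid, ?_⟩
  · intro d
    simp only [hβ, M.invol]
    congr 1
    rw [eq_iff_iff]
    exact ne_comm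
  · have hnd : (cover M β).Nodup := Finset.nodup _
    rw [Multiset.Nodup.ext hnd (cidc_nodup M hC)]
    intro K
    rw [mem_cover]
    constructor
    · rintro ⟨p, rfl⟩
      rw [hcirc]
      exact hmem p
    · intro hK
      obtain ⟨x, hx⟩ := exists_vert (hC.1 K hK) e
      obtain ⟨c, hc⟩ := exists_pass M (hC.1 K hK) hx
      exact ⟨(x, c), by rw [hcirc]; exact (huniq (x, c) K hK hc).symm⟩

/-- The number of circuit double covers is the number of valid symmetric bit functions. -/
theorem nu_eq [Fintype Z] (M : Model H e op) :
    nu H = {β : Z × Fin 3 → Bool | (∀ d, β (op d) = β d) ∧ Valid op β}.ncard := by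
  unfold nu
  rw [← Set.InjOn.ncard_image (f := cover M)]
  · congr 1
    ext C
    simp only [Set.mem_ofPred_eq, Set.mem_image]
    constructor
    · intro hC
      obtain ⟨β, h1, h2, h3⟩ := cover_surj M hC
      exact ⟨β, ⟨h1, h2⟩, h3⟩
    · rintro ⟨β, ⟨_, hv⟩, rfl⟩
      exact cover_isCiDC M hv
  · rintro β ⟨_, hv⟩ β' ⟨_, hv'⟩ h
    exact cover_inj M hv hv' h

end PartA


/-! ### Part B: gluing an inner piece to the outside of the 5-cycle -/

section PartB

variable {O J : Type*}

/-- The dart of the glued system belonging to a port or an inner dart. -/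
def emb (u : Fin 5 → O) : Fin 5 ⊕ J × Fin 3 → (O ⊕ J) × Fin 3
  | Sum.inl i => (Sum.inl (u i), 2)
  | Sum.inr w => (Sum.inr w.1, w.2)

lemma emb_inj {u : Fin 5 → O} (hu : Function.Injective u) :
    Function.Injective (emb (J := J) u) := by
  rintro (i | ⟨z, c⟩) (i' | ⟨z', c'⟩) h <;> simp [emb] at h ⊢
  · exact hu h
  · exact h

open scoped Classical in
/-- The glued rotation system. -/
noncomputable def gop (u : Fin 5 → O) (opo : O × Fin 3 → O × Fin 3)
    (q : Fin 5 ⊕ J × Fin 3 → Fin 5 ⊕ J × Fin 3) (d : (O ⊕ J) × Fin 3) : (O ⊕ J) × Fin 3 :=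
  if h : ∃ w, emb u w = d then emb u (q h.choose) else
    match d with
    | (Sum.inl x, c) => (Sum.inl (opo (x, c)).1, (opo (x, c)).2)
    | (Sum.inr z, c) => (Sum.inr z, c)

open scoped Classical in
/-- The glued bit function. -/
noncomputable def gbit (u : Fin 5 → O) (βo : O × Fin 3 → Bool)
    (γ : Fin 5 ⊕ J × Fin 3 → Bool) (d : (O ⊕ J) × Fin 3) : Bool :=
  if h : ∃ w, emb u w = d then γ h.choose else
    match d with
    | (Sum.inl x, c) => βo (x, c)
    | (Sum.inr _, _) => false

/-- The outer system: its fixed darts are exactly the ports. -/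
structure Outer (u : Fin 5 → O) (opo : O × Fin 3 → O × Fin 3) : Prop where
  uinj : Function.Injective u
  invol : ∀ d, opo (opo d) = d
  fix : ∀ d, opo d = d ↔ ∃ i, d = (u i, 2)

/-- Symmetric outer bit functions. -/
structure OBit (u : Fin 5 → O) (opo : O × Fin 3 → O × Fin 3) (βo : O × Fin 3 → Bool) : Prop where
  sym : ∀ d, βo (opo d) = βo d
  port : ∀ i, βo (u i, 2) = false

variable {u : Fin 5 → O} {opo : O × Fin 3 → O × Fin 3} {βo : O × Fin 3 → Bool}
  {q : Fin 5 ⊕ J × Fin 3 → Fin 5 ⊕ J × Fin 3} {γ : Fin 5 ⊕ J × Fin 3 → Bool}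

lemma gop_emb (hu : Function.Injective u) (w) : gop u opo q (emb u w) = emb u (q w) := by
  have h : ∃ w', emb u w' = emb u w := ⟨w, rfl⟩
  have : h.choose = w := emb_inj hu h.choose_spec
  rw [gop, dif_pos h, this]

lemma gbit_emb (hu : Function.Injective u) (w) : gbit u βo γ (emb u w) = γ w := by
  have h : ∃ w', emb u w' = emb u w := ⟨w, rfl⟩
  have : h.choose = w := emb_inj hu h.choose_spec
  rw [gbit, dif_pos h, this]

lemma not_emb {x c} (h : ∀ i, (x, c) ≠ (u i, (2 : Fin 3))) :
    ¬ ∃ w, emb (J := J) u w = (Sum.inl x, c) := by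
  rintro ⟨i | ⟨z, c'⟩, hw⟩
  · simp only [emb, Prod.mk.injEq, Sum.inl.injEq] at hw
    exact h i (by rw [hw.1, hw.2])
  · simp [emb] at hw

lemma gop_out {x c} (h : ∀ i, (x, c) ≠ (u i, (2 : Fin 3))) :
    gop u opo q (Sum.inl x, c) = (Sum.inl (opo (x, c)).1, (opo (x, c)).2) := by
  rw [gop, dif_neg (not_emb h)]

lemma gbit_out {x c} (h : ∀ i, (x, c) ≠ (u i, (2 : Fin 3))) :
    gbit u βo γ (Sum.inl x, c) = βo (x, c) := by
  rw [gbit, dif_neg (not_emb h)]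

lemma dart_cases (u : Fin 5 → O) (d : (O ⊕ J) × Fin 3) : (∃ w, d = emb u w) ∨
    ∃ x c, d = (Sum.inl x, c) ∧ ∀ i, (x, c) ≠ (u i, (2 : Fin 3)) := by
  obtain ⟨x | z, c⟩ := d
  · by_cases h : ∃ i, (x, c) = (u i, (2 : Fin 3))
    · obtain ⟨i, hi⟩ := h
      simp only [Prod.mk.injEq] at hi
      exact Or.inl ⟨Sum.inl i, by simp [emb, hi]⟩
    · push Not at h
      exact Or.inr ⟨x, c, rfl, h⟩
  · exact Or.inl ⟨Sum.inr (z, c), rfl⟩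

lemma out_lift (Ho : Outer u opo) (Hb : OBit u opo βo) {p p' : O × Fin 3}
    (h : CEq opo βo p p') :
    CEq (gop u opo q) (gbit u βo γ) (Sum.inl p.1, p.2) (Sum.inl p'.1, p'.2) := by
  induction h with
  | rel p p' hr =>
    obtain ⟨x, y, b, rfl, rfl⟩ := hr
    by_cases h : ∃ i, (x, y) = (u i, (2 : Fin 3))
    · have h1 := (Ho.fix (x, y)).2 h
      obtain ⟨i, hi⟩ := h
      have h2 : βo (x, y) = false := by rw [hi]; exact Hb.port i
      rw [h1, h2]
      simpa using CEq.refl _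
    · push Not at h
      have := CEq.link (op := gop u opo q) (β := gbit u βo γ) (Sum.inl x) y b
      rw [gop_out h, gbit_out h] at this
      exact this
  | refl p => exact CEq.refl _
  | symm p q _ ih => exact ih.symm
  | trans a b c _ _ ih1 ih2 => exact ih1.trans ih2

lemma outerValid (Ho : Outer u opo) (Hb : OBit u opo βo)
    (hv : Valid (gop u opo q) (gbit u βo γ)) : Valid opo βo := by
  intro p p' h hp
  have := hv _ _ (out_lift Ho Hb h) (by simp [hp])
  simp only [Prod.mk.injEq, Sum.inl.injEq] at this
  exact Prod.ext this.1 this.2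

/-- Nodes: paths through the outside, or inner corners. -/
def node (P : Fin 5 → Bool → ℕ) : Fin 5 ⊕ J × Fin 3 → Bool → ℕ ⊕ J × Fin 3
  | Sum.inl i, b => Sum.inl (P i b)
  | Sum.inr w, b => Sum.inr (w.1, cor w.2 b)

/-- Inner links. -/
def NRel (P : Fin 5 → Bool → ℕ) (q : Fin 5 ⊕ J × Fin 3 → Fin 5 ⊕ J × Fin 3)
    (γ : Fin 5 ⊕ J × Fin 3 → Bool) (n n' : ℕ ⊕ J × Fin 3) : Prop :=
  ∃ w b, n = node P w b ∧ n' = node P (q w) (b ^^ γ w)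

/-- Connection through the inside. -/
def NEq (P : Fin 5 → Bool → ℕ) (q : Fin 5 ⊕ J × Fin 3 → Fin 5 ⊕ J × Fin 3)
    (γ : Fin 5 ⊕ J × Fin 3 → Bool) : ℕ ⊕ J × Fin 3 → ℕ ⊕ J × Fin 3 → Prop :=
  Relation.EqvGen (NRel P q γ)

/-- The path labelling describes the outer equivalence on slots. -/
def IsPath (u : Fin 5 → O) (opo : O × Fin 3 → O × Fin 3) (βo : O × Fin 3 → Bool)
    (P : Fin 5 → Bool → ℕ) : Prop :=
  ∀ i b i' b', P i b = P i' b' ↔ CEq opo βo (u i, cor 2 b) (u i', cor 2 b')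

/-- Two paths meet at an outer vertex. -/
def Meet (u : Fin 5 → O) (opo : O × Fin 3 → O × Fin 3) (βo : O × Fin 3 → Bool)
    (P : Fin 5 → Bool → ℕ) (p p' : ℕ) : Prop :=
  ∃ i b i' b' x c c', P i b = p ∧ P i' b' = p' ∧ CEq opo βo (x, c) (u i, cor 2 b) ∧
    CEq opo βo (x, c') (u i', cor 2 b')

lemma Meet.symm {P : Fin 5 → Bool → ℕ} {p p'} (h : Meet u opo βo P p p') :
    Meet u opo βo P p' p := by
  obtain ⟨i, b, i', b', x, c, c', h1, h2, h3, h4⟩ := h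
  exact ⟨i', b', i, b, x, c', c, h2, h1, h4, h3⟩

/-- The corner represented by a node. -/
def Rep (u : Fin 5 → O) (P : Fin 5 → Bool → ℕ) : ℕ ⊕ J × Fin 3 → (O ⊕ J) × Fin 3 → Prop
  | Sum.inl p, k => ∃ i b, P i b = p ∧ k = (Sum.inl (u i), cor 2 b)
  | Sum.inr w, k => k = (Sum.inr w.1, w.2)

lemma rep_node (u : Fin 5 → O) (P : Fin 5 → Bool → ℕ) (w : Fin 5 ⊕ J × Fin 3) (b) :
    Rep u P (node P w b) ((emb u w).1, cor (emb u w).2 b) := by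
  rcases w with i | ⟨z, c⟩
  · exact ⟨i, b, rfl, rfl⟩
  · exact rfl

lemma rep_ceq (Ho : Outer u opo) (Hb : OBit u opo βo) {P : Fin 5 → Bool → ℕ}
    (hP : IsPath u opo βo P) {n : ℕ ⊕ J × Fin 3} {k k'} (h : Rep u P n k) (h' : Rep u P n k') :
    CEq (gop u opo q) (gbit u βo γ) k k' := by
  rcases n with p | w
  · obtain ⟨i, b, h1, rfl⟩ := h
    obtain ⟨i', b', h2, rfl⟩ := h'
    exact out_lift Ho Hb ((hP i b i' b').1 (h1.trans h2.symm))
  · cases h; cases h'; exact CEq.refl _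

lemma neq_ceq (Ho : Outer u opo) (Hb : OBit u opo βo) {P : Fin 5 → Bool → ℕ}
    (hP : IsPath u opo βo P) {n n' : ℕ ⊕ J × Fin 3} (h : NEq P q γ n n') :
    n = n' ∨ ((∃ k, Rep u P n k) ∧ (∃ k, Rep u P n' k) ∧
      ∀ k k', Rep u P n k → Rep u P n' k' → CEq (gop u opo q) (gbit u βo γ) k k') := by
  induction h with
  | rel n n' hr =>
    obtain ⟨w, b, rfl, rfl⟩ := hr
    refine Or.inr ⟨⟨_, rep_node u P w b⟩, ⟨_, rep_node u P _ _⟩, ?_⟩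
    intro k k' hk hk'
    have h1 := rep_ceq (q := q) (γ := γ) Ho Hb hP hk (rep_node u P w b)
    have h2 := rep_ceq (q := q) (γ := γ) Ho Hb hP (rep_node u P _ _) hk'
    refine h1.trans (CEq.trans ?_ h2)
    have := CEq.link (op := gop u opo q) (β := gbit u βo γ) (emb u w).1 (emb u w).2 b
    rw [Prod.mk.eta, gop_emb Ho.uinj, gbit_emb Ho.uinj] at this
    exact this
  | refl n => exact Or.inl rfl
  | symm n n' _ ih =>
    rcases ih with h | ⟨h1, h2, h3⟩
    · exact Or.inl h.symm
    · exact Or.inr ⟨h2, h1, fun k k' hk hk' => (h3 k' k hk' hk).symm⟩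
  | trans a b c _ _ ih1 ih2 =>
    rcases ih1 with rfl | ⟨h1, h2, h3⟩
    · exact ih2
    rcases ih2 with rfl | ⟨h1', h2', h3'⟩
    · exact Or.inr ⟨h1, h2, h3⟩
    obtain ⟨k0, hk0⟩ := h2
    exact Or.inr ⟨h1, h2', fun k k' hk hk' => (h3 k k0 hk hk0).trans (h3' k0 k' hk0 hk')⟩

theorem valid_imp (Ho : Outer u opo) (Hb : OBit u opo βo) {P : Fin 5 → Bool → ℕ}
    (hP : IsPath u opo βo P) (hv : Valid (gop u opo q) (gbit u βo γ)) {p p' : ℕ}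
    (hne : p ≠ p') (hn : NEq P q γ (Sum.inl p) (Sum.inl p')) : ¬ Meet u opo βo P p p' := by
  rintro ⟨i, b, i', b', x, c, c', rfl, rfl, h1, h2⟩
  apply hne
  rcases neq_ceq Ho Hb hP hn with h | ⟨_, _, h⟩
  · simpa using h
  · have h3 := h (Sum.inl (u i), cor 2 b) (Sum.inl (u i'), cor 2 b') ⟨i, b, rfl, rfl⟩
      ⟨i', b', rfl, rfl⟩
    have h4 := (out_lift (q := q) (γ := γ) Ho Hb h1).trans
      (h3.trans (out_lift (q := q) (γ := γ) Ho Hb h2).symm)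
    have h5 := hv _ _ h4 rfl
    simp only [Prod.mk.injEq, true_and] at h5
    rw [hP]
    rw [← h5] at h2
    exact h1.symm.trans h2

open scoped Classical in
/-- Global label of a corner. -/
noncomputable def glab (u : Fin 5 → O) (opo : O × Fin 3 → O × Fin 3) (βo : O × Fin 3 → Bool)
    (P : Fin 5 → Bool → ℕ) (lab : ℕ ⊕ J × Fin 3 → ℕ) :
    (O ⊕ J) × Fin 3 → ℕ ⊕ Set (O × Fin 3)
  | (Sum.inl x, c) => if h : ∃ s : Fin 5 × Bool, CEq opo βo (x, c) (u s.1, cor 2 s.2) then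
      Sum.inl (lab (Sum.inl (P h.choose.1 h.choose.2))) else Sum.inr {k | CEq opo βo (x, c) k}
  | (Sum.inr z, c) => Sum.inl (lab (Sum.inr (z, c)))

lemma glab_slot {P : Fin 5 → Bool → ℕ} (hP : IsPath u opo βo P) (lab : ℕ ⊕ J × Fin 3 → ℕ)
    {x c i b} (h : CEq opo βo (x, c) (u i, cor 2 b)) :
    glab u opo βo P lab (Sum.inl x, c) = Sum.inl (lab (Sum.inl (P i b))) := by
  have h' : ∃ s : Fin 5 × Bool, CEq opo βo (x, c) (u s.1, cor 2 s.2) := ⟨(i, b), h⟩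
  have : P h'.choose.1 h'.choose.2 = P i b := by
    rw [hP]
    exact h'.choose_spec.symm.trans h
  rw [glab, dif_pos h', this]

lemma glab_nonslot {P : Fin 5 → Bool → ℕ} (lab : ℕ ⊕ J × Fin 3 → ℕ)
    {x c} (h : ¬ ∃ s : Fin 5 × Bool, CEq opo βo (x, c) (u s.1, cor 2 s.2)) :
    glab u opo βo P lab (Sum.inl x, c) = Sum.inr {k | CEq opo βo (x, c) k} := by
  rw [glab, dif_neg h]

lemma glab_congr {P : Fin 5 → Bool → ℕ} (hP : IsPath u opo βo P) (lab : ℕ ⊕ J × Fin 3 → ℕ)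
    {x c x' c'} (h : CEq opo βo (x, c) (x', c')) :
    glab u opo βo P lab (Sum.inl x, c) = glab u opo βo P lab (Sum.inl x', c') := by
  by_cases hs : ∃ s : Fin 5 × Bool, CEq opo βo (x, c) (u s.1, cor 2 s.2)
  · obtain ⟨s, hs⟩ := hs
    rw [glab_slot hP lab hs, glab_slot hP lab (h.symm.trans hs)]
  · rw [glab_nonslot lab hs, glab_nonslot lab (fun ⟨s, h'⟩ => hs ⟨s, h.trans h'⟩)]
    congr 1
    ext k
    exact ⟨fun h' => h.symm.trans h', fun h' => h.trans h'⟩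

lemma glab_node {P : Fin 5 → Bool → ℕ} (hP : IsPath u opo βo P) (lab : ℕ ⊕ J × Fin 3 → ℕ)
    (w b) : glab u opo βo P lab ((emb u w).1, cor (emb u w).2 b) =
      Sum.inl (lab (node P w b)) := by
  rcases w with i | ⟨z, c⟩
  · exact glab_slot hP lab (CEq.refl _)
  · rfl

theorem valid_of (Ho : Outer u opo) {P : Fin 5 → Bool → ℕ}
    (hP : IsPath u opo βo P) (hv : Valid opo βo) (lab : ℕ ⊕ J × Fin 3 → ℕ)
    (hinv : ∀ w b, lab (node P w b) = lab (node P (q w) (b ^^ γ w)))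
    (hinj : ∀ z c c', lab (Sum.inr (z, c)) = lab (Sum.inr (z, c')) → c = c')
    (hK : ∀ i b i' b', lab (Sum.inl (P i b)) = lab (Sum.inl (P i' b')) → P i b ≠ P i' b' →
      ¬ Meet u opo βo P (P i b) (P i' b')) :
    Valid (gop u opo q) (gbit u βo γ) := by
  have key : ∀ k k', CEq (gop u opo q) (gbit u βo γ) k k' →
      glab u opo βo P lab k = glab u opo βo P lab k' := by
    intro k k' h
    induction h with
    | rel k k' hr =>
      obtain ⟨x, y, b, rfl, rfl⟩ := hr
      rcases dart_cases u (x, y) with ⟨w, hw⟩ | ⟨x', c', hw, hn⟩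
      · rw [hw, gop_emb Ho.uinj, gbit_emb Ho.uinj, glab_node hP, ← hinv, ← glab_node hP, ← hw]
      · simp only [Prod.mk.injEq] at hw
        obtain ⟨rfl, rfl⟩ := hw
        rw [gop_out hn, gbit_out hn]
        exact glab_congr hP lab (CEq.link _ _ _)
    | refl n => rfl
    | symm n n' _ ih => exact ih.symm
    | trans a b c _ _ ih1 ih2 => exact ih1.trans ih2
  rintro ⟨x, c⟩ ⟨x', c'⟩ h hx
  simp only at hx
  subst hx
  have hl := key _ _ h
  rcases x with x | z
  · suffices c = c' by rw [this]
    have fin : CEq opo βo (x, c) (x, c') → c = c' := fun h => by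
      simpa using hv _ _ h rfl
    by_cases hs : ∃ s : Fin 5 × Bool, CEq opo βo (x, c) (u s.1, cor 2 s.2) <;>
      by_cases hs' : ∃ s : Fin 5 × Bool, CEq opo βo (x, c') (u s.1, cor 2 s.2)
    · obtain ⟨⟨i, b⟩, hs⟩ := hs
      obtain ⟨⟨i', b'⟩, hs'⟩ := hs'
      rw [glab_slot hP lab hs, glab_slot hP lab hs'] at hl
      simp only [Sum.inl.injEq] at hl
      by_cases hPP : P i b = P i' b'
      · exact fin (hs.trans (((hP _ _ _ _).1 hPP).trans hs'.symm))
      · exact absurd ⟨i, b, i', b', x, c, c', rfl, rfl, hs, hs'⟩ (hK _ _ _ _ hl hPP)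
    · obtain ⟨⟨i, b⟩, hs⟩ := hs
      rw [glab_slot hP lab hs, glab_nonslot lab hs'] at hl
      simp at hl
    · obtain ⟨⟨i, b⟩, hs'⟩ := hs'
      rw [glab_slot hP lab hs', glab_nonslot lab hs] at hl
      simp at hl
    · rw [glab_nonslot lab hs, glab_nonslot lab hs'] at hl
      simp only [Sum.inr.injEq] at hl
      have : (x, c') ∈ {k | CEq opo βo (x, c') k} := CEq.refl _
      rw [← hl] at this
      exact fin this
  · simp only [glab, Sum.inl.injEq] at hl
    rw [hinj _ _ _ hl]

end PartB

/-! Each slot is joined to exactly one other slot through the outside. -/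

section TwoExits

lemma dihedral {F : Type*} [Finite F] (r τ : F → F) (hr : ∀ f, r (r f) = f)
    (hτ : ∀ f, τ (τ f) = f) (hrf : ∀ f, r f ≠ f) (S : F → Prop) (p : F) (hp : τ p = p)
    (hS0 : S p) (hSr : ∀ f, S f → S (r f)) (hSτ : ∀ f, S f → S (τ f))
    (hmin : ∀ S' : F → Prop, S' p → (∀ f, S' f → S' (r f)) → (∀ f, S' f → S' (τ f)) →
      ∀ f, S f → S' f) :
    ∃ p', p' ≠ p ∧ τ p' = p' ∧ S p' ∧ ∀ f, S f → τ f = f → f = p ∨ f = p' := by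
  have := Fintype.ofFinite F
  let R : Equiv.Perm F := ⟨r, r, hr, hr⟩
  let T : Equiv.Perm F := ⟨τ, τ, hτ, hτ⟩
  have hRR : R * R = 1 := by ext f; exact hr f
  have hTT : T * T = 1 := by ext f; exact hτ f
  set ρ := R * T with hρ
  have hTinv : T⁻¹ = T := inv_eq_of_mul_eq_one_right hTT
  have hRinv : R⁻¹ = R := inv_eq_of_mul_eq_one_right hRR
  have hconj : T * ρ * T⁻¹ = ρ⁻¹ := by
    rw [hρ, mul_inv_rev, hRinv, hTinv, mul_assoc, mul_assoc, hTT, mul_one]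
  have hTk : ∀ k : ℤ, T * ρ ^ k = ρ ^ (-k) * T := by
    intro k
    have : T * ρ ^ k * T⁻¹ = ρ ^ (-k) := by rw [← conj_zpow, hconj, inv_zpow, zpow_neg]
    rw [← this]; group
  have hτk : ∀ k : ℤ, τ ((ρ ^ k) p) = (ρ ^ (-k)) p := by
    intro k
    have := congrArg (fun g : Equiv.Perm F => g p) (hTk k)
    simp only [Equiv.Perm.mul_apply] at this
    have h2 : T p = p := hp
    rw [h2] at this
    exact this
  have hrk : ∀ k : ℤ, r ((ρ ^ k) p) = (ρ ^ (1 - k)) p := by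
    intro k
    have h1 : R = ρ * T := by rw [hρ, mul_assoc, hTT, mul_one]
    have h2 : R * ρ ^ k = ρ ^ (1 - k) * T := by
      rw [h1, mul_assoc, hTk, ← mul_assoc, ← zpow_one_add, sub_eq_add_neg]
    have := congrArg (fun g : Equiv.Perm F => g p) h2
    simp only [Equiv.Perm.mul_apply] at this
    have h2 : T p = p := hp
    rw [h2] at this
    exact this
  have hper : ∀ k : ℤ, (ρ ^ k) p = p ↔ (Function.minimalPeriod (ρ • ·) p : ℤ) ∣ k := by
    intro k
    exact MulAction.zpow_smul_eq_iff_minimalPeriod_dvd (a := ρ) (b := p) (n := k)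
  set n := Function.minimalPeriod (ρ • ·) p with hn
  have heq : ∀ k l : ℤ, (ρ ^ k) p = (ρ ^ l) p ↔ (n : ℤ) ∣ k - l := by
    intro k l
    rw [← hper, sub_eq_neg_add, zpow_add, Equiv.Perm.mul_apply, zpow_neg, Equiv.Perm.inv_eq_iff_eq]
  have hn0 : 0 < n := by
    have h1 := (hper (orderOf ρ)).1 (by rw [zpow_natCast, pow_orderOf_eq_one]; rfl)
    have h2 := orderOf_pos ρ
    rcases Nat.eq_zero_or_pos n with h | h
    · rw [h, Nat.cast_zero, zero_dvd_iff] at h1; omega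
    · exact h
  have hodd : ∀ k : ℤ, ¬ (n : ℤ) ∣ 2 * k - 1 := by
    intro k hk
    apply hrf ((ρ ^ k) p)
    rw [hrk, heq]
    have h1 : 1 - k - k = -(2 * k - 1) := by ring
    rw [h1]
    exact (dvd_neg).2 hk
  obtain ⟨m, hm⟩ : ∃ m : ℕ, n = 2 * m := by
    rcases Nat.even_or_odd' n with ⟨m, h | h⟩
    · exact ⟨m, h⟩
    · exact (hodd (m + 1) ⟨1, by rw [h]; push_cast; linarith⟩).elim
  have hSk : ∀ k : ℕ, S ((ρ ^ k) p) := by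
    intro k
    induction k with
    | zero => exact hS0
    | succ k ih =>
      rw [pow_succ']
      exact hSr _ (hSτ _ ih)
  refine ⟨(ρ ^ (m : ℤ)) p, ?_, ?_, ?_, ?_⟩
  · intro h
    rw [hper] at h
    have := Int.le_of_dvd (by omega) h
    omega
  · rw [hτk, heq, hm]
    exact ⟨-1, by push_cast; ring⟩
  · exact_mod_cast hSk m
  · intro f hf hfix
    obtain ⟨k, rfl⟩ := hmin (fun f => ∃ k : ℤ, f = (ρ ^ k) p) ⟨0, rfl⟩
      (by rintro _ ⟨k, rfl⟩; exact ⟨_, hrk k⟩) (by rintro _ ⟨k, rfl⟩; exact ⟨_, hτk k⟩) f hf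
    rw [hτk, heq] at hfix
    obtain ⟨l, hl⟩ := hfix
    rw [hper, heq]
    rw [hm] at hl ⊢
    push_cast at hl ⊢
    have hk : k = -(m * l) := by linarith
    rcases Int.even_or_odd' l with ⟨l', h | h⟩
    · exact Or.inl ⟨-l', by rw [hk, h]; ring⟩
    · exact Or.inr ⟨-l' - 1, by rw [hk, h]; ring⟩

variable {O : Type*} {u : Fin 5 → O} {opo : O × Fin 3 → O × Fin 3} {βo : O × Fin 3 → Bool}

/-- The corner of a flag. -/
def fcor (f : (O × Fin 3) × Bool) : O × Fin 3 := (f.1.1, cor f.1.2 f.2)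

/-- The other flag at the same corner. -/
def frot (f : (O × Fin 3) × Bool) : (O × Fin 3) × Bool :=
  ((f.1.1, if f.2 then f.1.2 + 2 else f.1.2 + 1), !f.2)

/-- Crossing an edge. -/
def fcross (opo : O × Fin 3 → O × Fin 3) (βo : O × Fin 3 → Bool) (f : (O × Fin 3) × Bool) :
    (O × Fin 3) × Bool := (opo f.1, f.2 ^^ βo f.1)

lemma frot_aux : ∀ (y : Fin 3) (b : Bool), (if (!b) then (if b then y + 2 else y + 1) + 2
    else (if b then y + 2 else y + 1) + 1) = y := by decide

lemma fcor_aux : ∀ (y : Fin 3) (b : Bool), cor (if b then y + 2 else y + 1) (!b) = cor y b := by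
  decide

lemma fcor_aux2 : ∀ (y : Fin 3) (b : Bool) (y' : Fin 3) (b' : Bool), cor y b = cor y' b' →
    (y' = y ∧ b' = b) ∨ (y' = (if b then y + 2 else y + 1) ∧ b' = !b) := by
  decide

lemma frot_frot (f : (O × Fin 3) × Bool) : frot (frot f) = f := by
  obtain ⟨⟨x, y⟩, b⟩ := f
  have := frot_aux y b
  simp only [frot, Prod.mk.injEq, true_and, Bool.not_not, and_true]
  exact this

lemma frot_ne (f : (O × Fin 3) × Bool) : frot f ≠ f := by
  intro h
  have := congrArg Prod.snd h
  simp [frot] at this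

lemma fcor_frot (f : (O × Fin 3) × Bool) : fcor (frot f) = fcor f := by
  obtain ⟨⟨x, y⟩, b⟩ := f
  simp only [frot, fcor, fcor_aux]

lemma fcor_eq {f f' : (O × Fin 3) × Bool} (h : fcor f = fcor f') : f' = f ∨ f' = frot f := by
  obtain ⟨⟨x, y⟩, b⟩ := f
  obtain ⟨⟨x', y'⟩, b'⟩ := f'
  simp only [fcor, Prod.mk.injEq] at h
  obtain ⟨rfl, h⟩ := h
  rcases fcor_aux2 _ _ _ _ h with ⟨rfl, rfl⟩ | ⟨rfl, rfl⟩
  · exact Or.inl rfl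
  · exact Or.inr rfl

lemma fcross_fcross (Ho : Outer u opo) (Hb : OBit u opo βo) (f) :
    fcross opo βo (fcross opo βo f) = f := by
  obtain ⟨d, b⟩ := f
  simp [fcross, Ho.invol, Hb.sym]

lemma fcross_ceq (f) : CEq opo βo (fcor f) (fcor (fcross opo βo f)) :=
  CEq.link f.1.1 f.1.2 f.2

/-- The slot of an index and a bit. -/
def slot (u : Fin 5 → O) (s : Fin 5 × Bool) : O × Fin 3 := (u s.1, cor 2 s.2)

lemma two_exits [Finite O] (Ho : Outer u opo) (Hb : OBit u opo βo) (s : Fin 5 × Bool) :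
    ∃ t, t ≠ s ∧ ∀ t', CEq opo βo (slot u s) (slot u t') ↔ t' = s ∨ t' = t := by
  set p : (O × Fin 3) × Bool := ((u s.1, 2), s.2) with hp
  have hfix : ∀ i b, fcross opo βo ((u i, 2), b) = ((u i, 2), b) := by
    intro i b
    have h1 := (Ho.fix (u i, 2)).2 ⟨i, rfl⟩
    simp [fcross, h1, Hb.port]
  obtain ⟨p', h1, h2, h3, h4⟩ := dihedral frot (fcross opo βo) frot_frot (fcross_fcross Ho Hb)
    frot_ne (fun f => CEq opo βo (fcor p) (fcor f)) p (hfix _ _) (CEq.refl _)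
    (fun f hf => by rw [fcor_frot]; exact hf) (fun f hf => hf.trans (fcross_ceq f)) (by
      intro S' h0 hr hc f hf
      have key : ∀ c c', CEq opo βo c c' → ((∃ f, S' f ∧ fcor f = c) ↔
          (∃ f, S' f ∧ fcor f = c')) := by
        intro c c' h
        have hh : ∀ f g, S' f → fcor f = fcor g → S' g := by
          intro f g hf hg
          rcases fcor_eq hg with rfl | rfl
          · exact hf
          · exact hr _ hf
        induction h with
        | rel c c' h =>
          obtain ⟨x, y, b, rfl, rfl⟩ := h
          constructor
          · rintro ⟨f, hf, hfc⟩
            have := hh f ((x, y), b) hf hfc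
            exact ⟨_, hc _ this, rfl⟩
          · rintro ⟨f, hf, hfc⟩
            have := hh f (fcross opo βo ((x, y), b)) hf hfc
            have := hc _ this
            rw [fcross_fcross Ho Hb] at this
            exact ⟨_, this, rfl⟩
        | refl n => exact Iff.rfl
        | symm n n' _ ih => exact ih.symm
        | trans a b c _ _ ih1 ih2 => exact ih1.trans ih2
      obtain ⟨g, hg, hgf⟩ := (key _ _ hf).1 ⟨p, h0, rfl⟩
      rcases fcor_eq hgf with rfl | rfl
      · exact hg
      · exact hr _ hg)
  obtain ⟨d, b⟩ := p'
  obtain ⟨i, rfl⟩ := (Ho.fix d).1 (congrArg Prod.fst h2)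
  refine ⟨(i, b), ?_, ?_⟩
  · rintro rfl
    exact h1 rfl
  · rintro ⟨i', b'⟩
    constructor
    · intro h
      rcases h4 ((u i', 2), b') h (hfix _ _) with h | h
      · left
        simp only [hp, Prod.mk.injEq] at h
        exact Prod.ext (Ho.uinj h.1.1) h.2
      · right
        simp only [Prod.mk.injEq] at h
        exact Prod.ext (Ho.uinj h.1.1) h.2
    · rintro (rfl | h)
      · exact CEq.refl _
      · rw [h]; exact h3

theorem exists_matching [Finite O] (Ho : Outer u opo) (Hb : OBit u opo βo)
    (hv : Valid opo βo) : ∃ π : Fin 5 × Bool → Fin 5 × Bool, (∀ s, π (π s) = s) ∧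
      (∀ s, (π s).1 ≠ s.1) ∧ ∀ s t, CEq opo βo (slot u s) (slot u t) ↔ t = s ∨ t = π s := by
  choose π h1 h2 using two_exits (u := u) (opo := opo) (βo := βo) Ho Hb
  refine ⟨π, ?_, ?_, h2⟩
  · intro s
    have := (h2 s (π s)).2 (Or.inr rfl)
    rcases (h2 (π s) s).1 this.symm with h | h
    · exact absurd h.symm (h1 s)
    · exact h.symm
  · intro s hs
    have h3 := (h2 s (π s)).2 (Or.inr rfl)
    have h4 := hv _ _ h3 (by simp [slot, hs])
    simp only [slot, Prod.mk.injEq] at h4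
    exact h1 s (Prod.ext hs (cor_inj _ _ _ h4.2.symm))

end TwoExits

/-! ### Part C: the finite computation -/

section PartC

/-- Base 16 digit. -/
def dig (t n : ℕ) : ℕ := (t >>> (4 * n)) % 16

/-- Path labels of the normal form `t`. -/
def pt (t : ℕ) (i : Fin 5) (b : Bool) : ℕ := dig t (2 * i.val + b.toNat)

/-- The normal forms of the outside: path labels, and for each of them bit masks of the
inner edges of the 5-cycle configuration together with labels of the circuits. -/
def certs : List (ℕ × List (ℕ × ℕ)) :=
  [(288603836420, [(127, 76150546727754384023809),
     (223, 9777936307630123388944),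
     (415, 5315040511728439861536),
     (575, 76150546726658915705090),
     (799, 5315049483613970178306),
     (992, 317950621205710516859408)]),
   (215874605060, [(96, 237340655446608956310032),
     (391, 5315040511728439861536),
     (447, 14758764936064782119440),
     (775, 5315049483613970178306),
     (863, 9743497546197248450817),
     (1016, 312639039793984887268112),
     (1023, 236468970191648328786177)]),
   (288319737860, [(211, 85039571528272639557889),
     (403, 9741178490421478822416),
     (447, 5610188981988318327312),
     (544, 166520060911598866543120),
     (735, 14813902507341560094978),
     (1004, 237355567127762502426912),
     (1023, 227320394236476396675330)]),
   (215306407940, [(124, 236451740015417398337840),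
     (288, 237355558719793041457680),
     (376, 236470114438009984327968),
     (391, 5611341638648062947632),
     (419, 10331474583355208577552),
     (543, 9777932667082448773377),
     (995, 156760513049814487806211),
     (1016, 236470123412224393421088)]),
   (142861275140, [(95, 155860157653122081300738),
     (160, 232597523710282435863568),
     (403, 9743484368615064613392),
     (419, 5610188981988318323472),
     (572, 156745601367565473620272),
     (684, 156745592395542001034000),
     (995, 152039227448447597548291),
     (1004, 156763971304146323313424)]),
   (142577176580, [(99, 76150546727754384019969),
     (352, 156763975791253527859984),
     (415, 9743484933764043518480),
     (547, 76150546726658915701250),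
     (672, 156745592395542001034000),
     (992, 156763971304146323313424),
     (1020, 307915448877382954590512)]),
   (288602726660, [(121, 5333423907370995621904),
     (217, 9777936307630123388944),
     (383, 10333793356694180475408),
     (735, 90372990667057158889730),
     (768, 90926532579974793409040),
     (998, 237355566564872679596289),
     (1023, 232043985153147049943298)]),
   (215873495300, [(102, 156745600805771119046913),
     (128, 156745591830599434383664),
     (351, 14762241418181990429200),
     (359, 10333793356694180475408),
     (792, 85910103559440269779728),
     (857, 85024659847187814096912),
     (999, 156763971022735772037379),
     (1017, 236174974944155200987152)]),
   (288317518340, [(211, 14813901944520959008784),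
     (287, 5610197389000253190672),
     (558, 10368227629855160869122),
     (640, 166520069318610801406480),
     (684, 10368232115798176637185),
     (721, 165339477701178976043536),
     (1004, 152039226604078503231745),
     (1009, 236174974944223921570320)]),
   (142859055620, [(0, 232597527066271096710160),
     (52, 231416935445346454282497),
     (73, 5628571812688056943376),
     (146, 232007226769762678939936),
     (182, 231416930959403438514434),
     (261, 5610197389000253186832),
     (309, 9743497544144504631824),
     (333, 5610197390095470957328),
     (522, 156745600802553935897360),
     (587, 76445695195960767025923),
     (666, 156745591830530463310128)]),
   (288034529540, [(63, 10368228477579380797968),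
     (217, 14518754602231161623056),
     (576, 90960967700859993731600),
     (721, 89780389541463377248784),
     (782, 85906631849263660998914),
     (838, 85906631847073225580832),
     (998, 156760512486855944638480),
     (1009, 231451384027553268302352)]),
   (288033419780, [(223, 19849868144370337985040),
     (561, 85039562555291640922640),
     (672, 10368232115798176637185),
     (785, 155875059798336586449424),
     (832, 156760503512779477684752),
     (992, 152039226604078503231745),
     (1006, 237354413907323878908162)]),
   (142002504515, [(125, 9777931820660610314768),
     (126, 9777931820660610499088),
     (417, 232631976212393479054352),
     (418, 157055661238870227493904),
     (573, 9777931819565142061584),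
     (574, 9777931819565142184464),
     (993, 232631976211298010801168),
     (994, 232631976211298010678288)]),
   (142006747715, [(120, 155856685374579561013506),
     (125, 155856685374579561074946),
     (257, 232631962189346732450832),
     (260, 157055651984340986045456),
     (667, 9777937153094184940048),
     (670, 9777937153094185062928),
     (994, 156760513049814487806736),
     (999, 156760513049814487991056)]),
   (142859043395, [(65, 232597527068461532128272),
     (72, 157040748711156900897808),
     (183, 236450590999373798375952),
     (190, 236450590999373798191632),
     (774, 5315049483613970178576),
     (783, 5315049483613970240016),
     (1008, 232043985153147049943328),
     (1017, 232043985153147050004768)]),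
   (288317506115, [(559, 76445694631838285496848),
     (574, 76445694631838285312528),
     (705, 166520069321896454533648),
     (720, 170965739148359579742736),
     (783, 5610197388793339908624),
     (798, 5610197388793339785744),
     (993, 237355566564941400121872),
     (1008, 312636733634449470796304)]),
   (142006764290, [(123, 14518745628154694673168),
     (125, 9777932665029705015824),
     (219, 9777937152067938365968),
     (221, 9777937152067938488848),
     (834, 232631962187087325897744),
     (836, 157055651980917390648336),
     (994, 227911842704590098273282),
     (996, 227910690046903856534529)]),
   (142859059970, [(209, 5333419420332762079520),
     (219, 5333419420332762202400),
     (311, 14464778659568379175696),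
     (317, 9743497544144504693264),
     (514, 232597527066202125575184),
     (520, 157040748707733305500688),
     (996, 152039226604078503039745),
     (1006, 152039226604078503101185)]),
   (288317522690, [(130, 166520069318748743676432),
     (144, 170965739144047680041488),
     (335, 5610197390095471022608),
     (349, 5610197390095470899728),
     (556, 5333423905180059046401),
     (574, 9777931819496421593346),
     (993, 156760513049883208519939),
     (1011, 236174974944223921570320)]),
   (142862389250, [(215, 231416931804799030206723),
     (219, 155860148678908173295874),
     (407, 14464770252556444312336),
     (411, 9743484368615064674832),
     (676, 232597523427707695866896),
     (680, 157040740300721370637328),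
     (996, 237355567127762502292512),
     (1000, 232634281244916340364304)]),
   (288320851970, [(36, 166520061476748346536464),
     (48, 170965726533529777746448),
     (387, 5315040511728439922976),
     (407, 9741178490421478822416),
     (591, 10368228475250752561411),
     (603, 14813893533127652090114),
     (1000, 156763971304146323313424),
     (1020, 236470123412224393482528)]),
   (288889049090, [(360, 166505158203564261388816),
     (368, 170931291412644577423888),
     (399, 10333779896537256763696),
     (407, 14759917592655806275872),
     (783, 10333793354365552238851),
     (791, 14759926564541336592642),
     (1000, 237359025663573609423888),
     (1008, 317065177490172407915024)])]

/-- Position of an inner corner in the label code. -/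
def cpos (z : Fin 5) (c : Fin 3) : ℕ := 5 + 3 * z.val + c.val

/-- Correctness of a label code. -/
def certOK (t m L : ℕ) : Prop :=
  (∀ i : Fin 5, ∀ b : Bool,
    dig L (pt t i b) = dig L (cpos i (cor 2 (b ^^ m.testBit i.val))) ∧
    dig L (cpos i (cor 1 b)) = dig L (cpos (i + 1) (cor 0 (b ^^ m.testBit (5 + i.val))))) ∧
  (∀ z : Fin 5, ∀ c c' : Fin 3, dig L (cpos z c) = dig L (cpos z c') → c = c') ∧ m < 1024

instance (t m L : ℕ) : Decidable (certOK t m L) := by unfold certOK; infer_instance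

/-- The path labels are exactly two to one, with values below five. -/
def ptOK (t : ℕ) : Prop :=
  (∀ i : Fin 5, ∀ b : Bool, pt t i b < 5) ∧
  (∀ i : Fin 5, pt t i false ≠ pt t i true) ∧
  ∀ i : Fin 5, ∀ b : Bool, ∀ i' : Fin 5, ∀ b' : Bool, pt t i b = pt t i' b' →
    (i, b) ≠ (i', b') → ∀ i'' : Fin 5, ∀ b'' : Bool, pt t i b = pt t i'' b'' →
    (i'', b'') = (i, b) ∨ (i'', b'') = (i', b')

instance (t : ℕ) : Decidable (ptOK t) := by unfold ptOK; infer_instance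

lemma certs_ok : ∀ T ∈ certs, ptOK T.1 ∧ (T.2.map Prod.fst).Nodup ∧
    ∀ c ∈ T.2, certOK T.1 c.1 c.2 := by
  decide +kernel

/-! Every matching of the slots has a normal form. -/

/-- Flip of a slot code. -/
def flp (e s : ℕ) : ℕ := s ^^^ ((e >>> (s / 2)) % 2)

/-- The matching given by the list of pairs has a normal form. -/
def leafOK (L : List (ℕ × ℕ)) : Bool :=
  certs.any fun T =>
    (L.all fun p =>
      (dig T.1 p.1 == dig T.1 p.2) || (dig T.1 (p.1 ^^^ 1) == dig T.1 p.2) ||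
      (dig T.1 p.1 == dig T.1 (p.2 ^^^ 1)) || (dig T.1 (p.1 ^^^ 1) == dig T.1 (p.2 ^^^ 1))) &&
    (List.range 32).any fun e => L.all fun p => dig T.1 (flp e p.1) == dig T.1 (flp e p.2)

/-- Enumeration of matchings. -/
def matchAll : ℕ → List ℕ → List (ℕ × ℕ) → Bool
  | 0, _, acc => leafOK acc
  | _ + 1, [], acc => leafOK acc
  | n + 1, s :: rem, acc =>
    rem.all fun t => (s / 2 == t / 2) || matchAll n (rem.erase t) ((s, t) :: acc)

lemma matchAll_ok : matchAll 10 [0, 1, 2, 3, 4, 5, 6, 7, 8, 9] [] = true := by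
  decide +kernel

end PartC


lemma matchAll_sound (π : ℕ → ℕ) (hπ : ∀ x, π (π x) = x) (hd : ∀ x < 10, π x / 2 ≠ x / 2) :
    ∀ (n : ℕ) (rem : List ℕ) (acc : List (ℕ × ℕ)), matchAll n rem acc = true →
      rem.length ≤ n → rem.Nodup → (∀ x ∈ rem, π x ∈ rem ∧ x < 10) →
      ∃ L, leafOK L = true ∧ (∀ e ∈ acc, e ∈ L) ∧
        ∀ x ∈ rem, (x, π x) ∈ L ∨ (π x, x) ∈ L := by
  intro n
  induction n with
  | zero =>
    intro rem acc h hl _ _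
    have : rem = [] := List.length_eq_zero_iff.1 (by omega)
    subst this
    exact ⟨acc, h, fun e he => he, by simp⟩
  | succ n ih =>
    intro rem acc h hl hnd hcl
    cases rem with
    | nil => exact ⟨acc, h, fun e he => he, by simp⟩
    | cons s rem =>
      simp only [matchAll, List.all_eq_true] at h
      have hs := hcl s (by simp)
      have hds := hd s hs.2
      have hne : π s ≠ s := fun hh => hds (by rw [hh])
      have hmem : π s ∈ rem := by
        rcases List.mem_cons.1 hs.1 with h | h
        · exact absurd h hne
        · exact h
      have h1 := h (π s) hmem
      rw [Bool.or_eq_true] at h1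
      have h2 := h1.resolve_left (by simpa using fun hh => hds hh.symm)
      have hnd' := List.nodup_cons.1 hnd
      obtain ⟨L, hL, hacc, hrem⟩ := ih (rem.erase (π s)) _ h2 (by
        have := List.length_erase_of_mem hmem
        simp only [List.length_cons] at hl
        omega) (hnd'.2.erase _) (by
        intro x hx
        have hx1 := (hnd'.2.mem_erase_iff).1 hx
        have hx2 := hcl x (by simp [hx1.2])
        refine ⟨?_, hx2.2⟩
        rw [hnd'.2.mem_erase_iff]
        refine ⟨?_, ?_⟩
        · intro hh
          have : x = s := by rw [← hπ x, hh, hπ]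
          exact hnd'.1 (this ▸ hx1.2)
        · rcases List.mem_cons.1 hx2.1 with hh | hh
          · exact absurd (by rw [← hh, hπ]) hx1.1
          · exact hh)
      refine ⟨L, hL, fun e he => hacc e (List.mem_cons_of_mem _ he), ?_⟩
      have hsL : (s, π s) ∈ L := hacc _ (by simp)
      intro x hx
      rcases List.mem_cons.1 hx with rfl | hx
      · exact Or.inl hsL
      · by_cases hxs : x = π s
        · right; rw [hxs, hπ]; exact hsL
        · exact hrem x ((hnd'.2.mem_erase_iff).2 ⟨hxs, hx⟩)

/-- Slot code. -/
def scode (s : Fin 5 × Bool) : ℕ := 2 * s.1.val + s.2.toNat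

lemma scode_lt : ∀ s, scode s < 10 := by decide
lemma scode_div (s) : scode s / 2 = s.1.val := by
  obtain ⟨i, b⟩ := s
  cases b <;> (simp [scode]; try omega)
lemma scode_surj : ∀ x < 10, ∃ s, scode s = x := by decide
lemma scode_inj (s t) (h : scode s = scode t) : s = t := by
  have h1 := scode_div s
  have h2 := scode_div t
  obtain ⟨i, b⟩ := s
  obtain ⟨i', b'⟩ := t
  rw [h, h2] at h1
  have hi : i' = i := Fin.ext h1
  subst hi
  cases b <;> cases b' <;> simp [scode] at h ⊢

lemma flp_scode : ∀ e < 32, ∀ i : Fin 5, ∀ b : Bool,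
    flp e (scode (i, b)) = scode (i, b ^^ e.testBit i.val) := by
  decide +kernel

theorem exists_normal (π : Fin 5 × Bool → Fin 5 × Bool) (h1 : ∀ s, π (π s) = s)
    (h2 : ∀ s, (π s).1 ≠ s.1) : ∃ T ∈ certs, ∃ ε : Fin 5 → Bool, ∀ s t : Fin 5 × Bool,
      pt T.1 s.1 (s.2 ^^ ε s.1) = pt T.1 t.1 (t.2 ^^ ε t.1) ↔ t = s ∨ t = π s := by
  classical
  let π' : ℕ → ℕ := fun x => if h : ∃ s, scode s = x then scode (π h.choose) else x
  have hπ' : ∀ s, π' (scode s) = scode (π s) := by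
    intro s
    have h : ∃ s', scode s' = scode s := ⟨s, rfl⟩
    have h' : h.choose = s := scode_inj _ _ h.choose_spec
    simp only [π', dif_pos h, h']
  obtain ⟨L, hL, -, hrem⟩ := matchAll_sound π' (by
      intro x
      by_cases h : ∃ s, scode s = x
      · obtain ⟨s, rfl⟩ := h
        rw [hπ', hπ', h1]
      · simp only [π', dif_neg h]) (by
      intro x hx
      obtain ⟨s, rfl⟩ := scode_surj x hx
      rw [hπ', scode_div, scode_div]
      exact fun h => h2 s (Fin.ext h)) 10 _ _ matchAll_ok (by simp) (by decide) (by
      intro x hx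
      have hx : x < 10 := by
        have := (by decide : ∀ x ∈ [0, 1, 2, 3, 4, 5, 6, 7, 8, 9], x < 10)
        exact this x hx
      refine ⟨?_, hx⟩
      obtain ⟨s, rfl⟩ := scode_surj x hx
      rw [hπ']
      have := scode_lt (π s)
      have h10 := (by decide : ∀ x < 10, x ∈ [0, 1, 2, 3, 4, 5, 6, 7, 8, 9])
      exact h10 _ this)
  simp only [leafOK, List.any_eq_true, Bool.and_eq_true, List.mem_range] at hL
  obtain ⟨T, hT, -, e, he, hLe⟩ := hL
  rw [List.all_eq_true] at hLe
  refine ⟨T, hT, fun i => e.testBit i.val, ?_⟩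
  have key : ∀ s : Fin 5 × Bool, pt T.1 s.1 (s.2 ^^ e.testBit s.1.val) =
      pt T.1 (π s).1 ((π s).2 ^^ e.testBit (π s).1.val) := by
    intro s
    have hs : ∀ s : Fin 5 × Bool, pt T.1 s.1 (s.2 ^^ e.testBit s.1.val) =
        dig T.1 (flp e (scode s)) := by
      rintro ⟨i, b⟩
      rw [flp_scode e he i b]
      rfl
    rw [hs, hs, ← hπ']
    have hmem : scode s ∈ [0, 1, 2, 3, 4, 5, 6, 7, 8, 9] := by
      have h10 := (by decide : ∀ x < 10, x ∈ [0, 1, 2, 3, 4, 5, 6, 7, 8, 9])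
      exact h10 _ (scode_lt s)
    rcases hrem _ hmem with h | h
    · simpa using hLe _ h
    · have h3 := hLe _ h
      simp only [beq_iff_eq] at h3
      exact h3.symm
  have hok := (certs_ok T hT).1.2.2
  intro s t
  constructor
  · intro h
    by_contra hcon
    push Not at hcon
    have hsp : s ≠ π s := fun hh => h2 s (by rw [← hh])
    have hx : ∀ a b : Fin 5 × Bool, (a.1, a.2 ^^ e.testBit a.1.val) =
        (b.1, b.2 ^^ e.testBit b.1.val) → a = b := by
      rintro ⟨i, b⟩ ⟨i', b'⟩ hh
      simp only [Prod.mk.injEq] at hh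
      obtain ⟨rfl, hh⟩ := hh
      simp at hh
      rw [hh]
    rcases hok _ _ _ _ (key s) (fun hh => hsp (hx _ _ hh)) _ _ h with hh | hh
    · exact hcon.1 (hx _ _ hh)
    · exact hcon.2 (hx _ _ hh)
  · rintro (rfl | rfl)
    · rfl
    · exact key _


/-! The inequality. -/

/-- Binary encoding of a list of bits. -/
def enc : List Bool → ℕ
  | [] => 0
  | b :: l => b.toNat + 2 * enc l

/-- The ten pairs of paths. -/
def prs : List (ℕ × ℕ) :=
  [(0, 1), (0, 2), (0, 3), (0, 4), (1, 2), (1, 3), (1, 4), (2, 3), (2, 4), (3, 4)]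

/-- Evaluate a number before use. -/
def force {α : Type} (n : ℕ) (f : ℕ → α) : α :=
  match n with
  | 0 => f 0
  | k + 1 => f (k + 1)

lemma force_eq {α : Type} (n : ℕ) (f : ℕ → α) : force n f = f n := by cases n <;> rfl

/-- Evaluate a list before use. -/
def forceN {α : Type} : List ℕ → (List ℕ → α) → α
  | [], k => k []
  | x :: l, k => force x fun a => forceN l fun l' => k (a :: l')

lemma forceN_eq {α : Type} (l : List ℕ) (k : List ℕ → α) : forceN l k = k l := by
  induction l generalizing k with
  | nil => rfl
  | cons x l ih => simp [forceN, force_eq, ih]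

/-- Merge two classes. -/
def merge (l : List ℕ) (e : ℕ × ℕ) : List ℕ :=
  force (l.getD e.1 0) fun a => force (l.getD e.2 0) fun b =>
    l.map fun x => bif Nat.beq x b then a else x

/-- Class labels of the five paths after adding links. -/
def closureAux : List (ℕ × ℕ) → List ℕ → List ℕ
  | [], l => l
  | e :: es, l => forceN (merge l e) fun l' => closureAux es l'

/-- Class labels of the five paths after adding links. -/
def closure5 (links : List (ℕ × ℕ)) : List ℕ := closureAux links [0, 1, 2, 3, 4]

/-- Mask of the pairs of paths with equal labels. -/
def fmask (l : ℕ → ℕ) : ℕ := enc (prs.map fun p => Nat.beq (l p.1) (l p.2))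

/-- The first index of the pair. -/
def jkJ (a : Fin 10) : Fin 5 := ⟨dig 215303127040 a.val % 5, Nat.mod_lt _ (by decide)⟩
/-- The second index of the pair. -/
def jkK (a : Fin 10) : Fin 5 := ⟨dig 292933485345 a.val % 5, Nat.mod_lt _ (by decide)⟩
/-- The other three indices. -/
def jkM (a : Fin 10) (c : Fin 3) : Fin 5 :=
  ⟨dig 171407931331365244342810002506060850 (3 * a.val + c.val) % 5, Nat.mod_lt _ (by decide)⟩
/-- The weight of the pair. -/
def jkW (a : Fin 10) : ℕ := dig 142288757010 a.val

/-- Links between paths in the reduced configuration, from the labels of the ports. -/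
def jlinks (l : List ℕ) (g : Bool × Bool × Bool × Bool) : List (ℕ × ℕ) :=
  match l with
  | [j0, j1, k0, k1, a0, a1, b0, b1, c0, c1] =>
    [(j0, bif g.1 then k1 else k0), (j1, bif g.1 then k0 else k1),
     (bif g.2.2.2 then c0 else c1, bif g.2.2.1 then b1 else b0),
     (bif g.2.1 then a0 else a1, bif g.2.2.2 then c1 else c0),
     (bif g.2.2.1 then b0 else b1, bif g.2.1 then a1 else a0)]
  | _ => []

/-- Labels of the ports, in order. -/
def plist (t : ℕ) (a : Fin 10) : List ℕ :=
  [pt t (jkJ a) false, pt t (jkJ a) true, pt t (jkK a) false, pt t (jkK a) true,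
   pt t (jkM a 0) false, pt t (jkM a 0) true, pt t (jkM a 1) false, pt t (jkM a 1) true,
   pt t (jkM a 2) false, pt t (jkM a 2) true]

/-- Forbidden pairs in the reduced configuration. -/
def jmask (l : List ℕ) (g : Bool × Bool × Bool × Bool) : ℕ :=
  forceN (closure5 (jlinks l g)) fun l => fmask fun p => l.getD p 0

/-- All bit quadruples. -/
def quads : List (Bool × Bool × Bool × Bool) :=
  [false, true].flatMap fun a => [false, true].flatMap fun b => [false, true].flatMap fun c =>
    [false, true].map fun d => (a, b, c, d)

/-- Evaluate a list before use. -/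
def forceL {α : Type} : List (ℕ × ℕ) → (List (ℕ × ℕ) → α) → α
  | [], k => k []
  | x :: l, k => force x.1 fun a => force x.2 fun b => forceL l fun l' => k ((a, b) :: l')

lemma forceL_eq {α : Type} (l : List (ℕ × ℕ)) (k : List (ℕ × ℕ) → α) : forceL l k = k l := by
  induction l generalizing k with
  | nil => rfl
  | cons x l ih => simp [forceL, force_eq, ih]

/-- Weighted number of masks avoiding `M`. -/
def wsum (l : List (ℕ × ℕ)) (M : ℕ) : ℕ :=
  (l.map fun x => if x.2 &&& M = 0 then x.1 else 0).sum

/-- Weighted masks of the reduced configurations. -/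
def jmasks (t : ℕ) : List (ℕ × ℕ) :=
  (List.finRange 10).flatMap fun a =>
    forceN (plist t a) fun l => quads.map fun g => (jkW a, jmask l g)

/-- Masks of the 5-cycle configuration. -/
def gmasks (T : ℕ × List (ℕ × ℕ)) : List (ℕ × ℕ) :=
  T.2.map fun c => (4, fmask (dig c.2))

/-- Pairs of paths which meet at the ends of the ports. -/
def forced (t : ℕ) : ℕ :=
  enc (prs.map fun p => [0, 1, 2, 3, 4].any fun i : Fin 5 =>
    (pt t i false == p.1 && pt t i true == p.2) || (pt t i false == p.2 && pt t i true == p.1))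

/-- The inequality for a normal form. -/
def ineqOK (T : ℕ × List (ℕ × ℕ)) : Bool :=
  force (forced T.1) fun F => forceL (jmasks T.1) fun l₀ =>
    forceL (l₀.filter fun x => x.2 &&& F == 0) fun l => forceL (gmasks T) fun l' =>
    (List.range 1024).all fun M => force M fun M =>
      !(M &&& F == F) || Nat.ble (wsum l M) (wsum l' M)

lemma ineq_ok : certs.all ineqOK = true := by
  decide +kernel

lemma jk_spec : ∀ a : Fin 10, jkJ a ≠ jkK a ∧ (∀ c, jkM a c ≠ jkJ a ∧ jkM a c ≠ jkK a) ∧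
    (∀ c c', jkM a c = jkM a c' → c = c') ∧ ∀ i, i = jkJ a ∨ i = jkK a ∨ ∃ c, i = jkM a c := by
  decide +kernel

lemma jkW_sum : ∑ a, jkW a = 15 := by decide +kernel


/-! Soundness of the computation. -/

lemma enc_step (b b' : Bool) (A B : ℕ) :
    (b.toNat + 2 * A) &&& (b'.toNat + 2 * B) = (b && b').toNat + 2 * (A &&& B) := by
  have h : ∀ (b : Bool) (n : ℕ), b.toNat + 2 * n = Nat.bit b n := by
    intro b n; cases b <;> simp [Nat.bit] <;> omega
  rw [h, h, h, Nat.land_bit]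

lemma enc_and {α : Type*} (f g : α → Bool) (l : List α) :
    enc (l.map f) &&& enc (l.map g) = enc (l.map fun x => f x && g x) := by
  induction l with
  | nil => simp [enc]
  | cons x l ih => simp only [List.map_cons, enc, enc_step, ih]

lemma enc_eq_zero {α : Type*} (f : α → Bool) (l : List α) :
    enc (l.map f) = 0 ↔ ∀ x ∈ l, f x = false := by
  induction l with
  | nil => simp [enc]
  | cons x l ih =>
    simp only [List.map_cons, enc, List.forall_mem_cons, ← ih]
    cases f x <;> simp

lemma enc_lt (l : List Bool) : enc l < 2 ^ l.length := by
  induction l with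
  | nil => simp [enc]
  | cons x l ih =>
    simp only [enc, List.length_cons, pow_succ]
    cases x <;> simp <;> omega

lemma merge_eq (l : List ℕ) (e : ℕ × ℕ) : merge l e =
    l.map fun x => if x = l.getD e.2 0 then l.getD e.1 0 else x := by
  simp only [merge, force_eq]
  congr 1
  funext x
  by_cases h : x = l.getD e.2 0
  · simp [h]
  · rw [if_neg h]
    have : Nat.beq x (l.getD e.2 0) = false := by
      rw [← Bool.not_eq_true, Nat.beq_eq]; exact h
    rw [this]; rfl

lemma closure_sound (C : ℕ → ℕ → Prop) (hC : Equivalence C) (es : List (ℕ × ℕ))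
    (hes : ∀ e ∈ es, C e.1 e.2 ∧ e.1 < 5 ∧ e.2 < 5) :
    ∀ l : List ℕ, l.length = 5 → (∀ (p q x : ℕ), l[p]? = some x → l[q]? = some x → C p q) →
      (closureAux es l).length = 5 ∧
      ∀ (p q x : ℕ), (closureAux es l)[p]? = some x → (closureAux es l)[q]? = some x → C p q := by
  induction es with
  | nil => intro l hl h; exact ⟨hl, h⟩
  | cons e es ih =>
    intro l hl h
    obtain ⟨he, he1, he2⟩ := hes e (by simp)
    rw [closureAux, forceN_eq]
    refine ih (fun e he => hes e (List.mem_cons_of_mem _ he)) _ (by rw [merge_eq]; simpa) ?_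
    intro p q x hp hq
    rw [merge_eq, List.getElem?_map, Option.map_eq_some_iff] at hp hq
    obtain ⟨a, ha, hax⟩ := hp
    obtain ⟨b, hb, hbx⟩ := hq
    have h1 : l[e.1]? = some (l.getD e.1 0) := by
      rw [List.getD_eq_getElem _ _ (by omega)]; simp [he1, hl]
    have h2 : l[e.2]? = some (l.getD e.2 0) := by
      rw [List.getD_eq_getElem _ _ (by omega)]; simp [he2, hl]
    by_cases ea : a = l.getD e.2 0 <;> by_cases eb : b = l.getD e.2 0
    · exact h p q a ha (by rw [hb, ea, eb])
    · rw [if_pos ea] at hax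
      rw [if_neg eb] at hbx
      have h3 := h p e.2 a ha (by rw [h2, ea])
      have h4 := h q e.1 b hb (by rw [h1, hax, hbx])
      exact hC.trans h3 (hC.trans (hC.symm he) (hC.symm h4))
    · rw [if_neg ea] at hax
      rw [if_pos eb] at hbx
      have h3 := h q e.2 b hb (by rw [h2, eb])
      have h4 := h p e.1 a ha (by rw [h1, hax, hbx])
      exact hC.trans h4 (hC.trans he (hC.symm h3))
    · rw [if_neg ea] at hax
      rw [if_neg eb] at hbx
      exact h p q a ha (by rw [hb, hax, hbx])

lemma closure5_sound (C : ℕ → ℕ → Prop) (hC : Equivalence C) (es : List (ℕ × ℕ))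
    (hes : ∀ e ∈ es, C e.1 e.2 ∧ e.1 < 5 ∧ e.2 < 5) (p q : ℕ) (hp : p < 5) (hq : q < 5)
    (h : (closure5 es).getD p 0 = (closure5 es).getD q 0) : C p q := by
  have := closure_sound C hC es hes [0, 1, 2, 3, 4] rfl (by
    intro p q x hp hq
    have key : ∀ (p y : ℕ), ([0, 1, 2, 3, 4] : List ℕ)[p]? = some y → y = p := by
      intro p y h
      match p, h with
      | 0, h => simpa using h.symm
      | 1, h => simpa using h.symm
      | 2, h => simpa using h.symm
      | 3, h => simpa using h.symm
      | 4, h => simpa using h.symm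
      | n + 5, h => simp at h
    have e1 := key p x hp
    have e2 := key q x hq
    rw [← e1, ← e2]; exact hC.refl _)
  refine this.2 p q ((closure5 es).getD p 0) ?_ ?_
  · rw [List.getD_eq_getElem _ _ (by rw [closure5, this.1]; exact hp)]
    exact List.getElem?_eq_getElem _
  · rw [h, List.getD_eq_getElem _ _ (by rw [closure5, this.1]; exact hq)]
    exact List.getElem?_eq_getElem _

lemma wsum_filter (l : List (ℕ × ℕ)) (F M : ℕ) (h : M &&& F = F) :
    wsum (l.filter fun x => x.2 &&& F == 0) M = wsum l M := by
  induction l with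
  | nil => rfl
  | cons x l ih =>
    unfold wsum at ih ⊢
    by_cases hx : x.2 &&& F = 0
    · rw [List.filter_cons_of_pos (by simpa using hx)]
      simp only [List.map_cons, List.sum_cons, ih]
    · rw [List.filter_cons_of_neg (by simpa using hx)]
      simp only [List.map_cons, List.sum_cons, ih]
      have : x.2 &&& M ≠ 0 := by
        intro h0
        apply hx
        rw [← h, ← Nat.land_assoc, h0, Nat.zero_and]
      simp [this]

lemma wsum_const {α : Type*} (l : List α) (w : ℕ) (f : α → ℕ) (M : ℕ) :
    wsum (l.map fun x => (w, f x)) M = w * l.countP fun x => f x &&& M = 0 := by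
  induction l with
  | nil => simp [wsum]
  | cons x l ih =>
    unfold wsum at ih ⊢
    rw [List.countP_cons]
    simp only [List.map_cons, List.sum_cons, ih]
    by_cases h : f x &&& M = 0 <;> simp [h] <;> ring

lemma wsum_append (l l' : List (ℕ × ℕ)) (M : ℕ) : wsum (l ++ l') M = wsum l M + wsum l' M := by
  simp [wsum]

lemma wsum_flatMap {α : Type*} (l : List α) (f : α → List (ℕ × ℕ)) (M : ℕ) :
    wsum (l.flatMap f) M = (l.map fun a => wsum (f a) M).sum := by
  induction l with
  | nil => simp [wsum]
  | cons x l ih => rw [List.flatMap_cons, wsum_append, ih]; simp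

theorem ineq_sound (T) (hT : T ∈ certs) (M : ℕ) (hM : M < 1024)
    (hF : M &&& forced T.1 = forced T.1) :
    ∑ a, jkW a * quads.countP (fun g => jmask (plist T.1 a) g &&& M = 0) ≤
      4 * T.2.countP (fun c => fmask (dig c.2) &&& M = 0) := by
  have h := List.all_eq_true.1 ineq_ok T hT
  simp only [ineqOK, force_eq, forceL_eq, List.all_eq_true, List.mem_range] at h
  have h := h M hM
  rw [hF] at h
  simp only [beq_self_eq_true, Bool.not_true, Bool.false_or, Nat.ble_eq] at h
  rw [wsum_filter _ _ _ hF, gmasks, wsum_const, jmasks, wsum_flatMap] at h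
  simp only [forceN_eq, wsum_const] at h
  rw [Fin.sum_univ_def]
  exact h


/-! ### The local inequality -/

section Local

/-- Inner darts of the 5-cycle configuration. -/
def qG : Fin 5 ⊕ Fin 5 × Fin 3 → Fin 5 ⊕ Fin 5 × Fin 3
  | Sum.inl i => Sum.inr (i, 2)
  | Sum.inr (i, 0) => Sum.inr (i - 1, 1)
  | Sum.inr (i, 1) => Sum.inr (i + 1, 0)
  | Sum.inr (i, 2) => Sum.inl i

/-- Position of an index among the three indices of `jkM`. -/
def jkC (a : Fin 10) (i : Fin 5) : Fin 3 :=
  if i = jkM a 0 then 0 else if i = jkM a 1 then 1 else 2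

lemma jkC_spec : ∀ a c, jkC a (jkM a c) = c := by decide +kernel

/-- Inner darts of the reduced configuration. -/
def qJ (a : Fin 10) : Fin 5 ⊕ Unit × Fin 3 → Fin 5 ⊕ Unit × Fin 3
  | Sum.inl i => if i = jkJ a then Sum.inl (jkK a) else if i = jkK a then Sum.inl (jkJ a)
      else Sum.inr ((), jkC a i)
  | Sum.inr (_, c) => Sum.inl (jkM a c)

lemma qJ_j (a) : qJ a (Sum.inl (jkJ a)) = Sum.inl (jkK a) := by simp [qJ]
lemma qJ_k (a) : qJ a (Sum.inl (jkK a)) = Sum.inl (jkJ a) := by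
  simp [qJ, (jk_spec a).1.symm]
lemma qJ_m (a c) : qJ a (Sum.inl (jkM a c)) = Sum.inr ((), c) := by
  simp [qJ, ((jk_spec a).2.1 c).1, ((jk_spec a).2.1 c).2, jkC_spec]

lemma prs_lt : ∀ p ∈ prs, p.1 < 5 ∧ p.2 < 5 ∧ p.1 ≠ p.2 := by decide
lemma prs_mem : ∀ p : ℕ, p < 5 → ∀ p' : ℕ, p' < 5 → p ≠ p' → (p, p') ∈ prs ∨
    (p', p) ∈ prs := by
  intro p hp p' hp' h
  interval_cases p <;> interval_cases p' <;> simp [prs] at h ⊢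
lemma mem_quads : ∀ a b c d : Bool, (a, b, c, d) ∈ quads := by decide

/-- Flip bits of the slots. -/
def sbit {J : Type*} (ε : Fin 5 → Bool) : Fin 5 ⊕ J × Fin 3 → Bool
  | Sum.inl i => ε i
  | Sum.inr _ => false

/-- Inner bits coded by a mask. -/
def mbit (m : ℕ) : Fin 5 ⊕ Fin 5 × Fin 3 → Bool
  | Sum.inl i => m.testBit i.val
  | Sum.inr (i, 0) => m.testBit (5 + (i - 1).val)
  | Sum.inr (i, 1) => m.testBit (5 + i.val)
  | Sum.inr (i, 2) => m.testBit i.val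

/-- Inner bits coded by a mask and flips. -/
def gam (ε : Fin 5 → Bool) (m : ℕ) (w : Fin 5 ⊕ Fin 5 × Fin 3) : Bool :=
  mbit m w ^^ sbit ε w ^^ sbit ε (qG w)

lemma qG_invol (w) : qG (qG w) = w := by
  rcases w with i | ⟨i, c⟩
  · rfl
  · fin_cases c <;> simp [qG]

lemma gam_sym (ε m w) : gam ε m (qG w) = gam ε m w := by
  have h : mbit m (qG w) = mbit m w := by
    rcases w with i | ⟨i, c⟩
    · rfl
    · fin_cases c <;> simp [qG, mbit]
  rw [gam, gam, h, qG_invol]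
  cases mbit m w <;> cases sbit ε w <;> cases sbit ε (qG w) <;> rfl

lemma gam_inj (ε m m') (hm : m < 1024) (hm' : m' < 1024) (h : gam ε m = gam ε m') : m = m' := by
  have h' : ∀ w, mbit m w = mbit m' w := by
    intro w
    have := congrFun h w
    simpa [gam] using this
  apply Nat.eq_of_testBit_eq
  intro k
  by_cases hk : k < 5
  · exact h' (Sum.inl ⟨k, hk⟩)
  · by_cases hk' : k < 10
    · have := h' (Sum.inr (⟨k - 5, by omega⟩, 1))
      simp only [mbit] at this
      rwa [show 5 + (k - 5) = k by omega] at this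
    · have h2 : 1024 ≤ 2 ^ k := by
        calc 1024 = 2 ^ 10 := by norm_num
          _ ≤ 2 ^ k := Nat.pow_le_pow_right (by norm_num) (by omega)
      rw [Nat.testBit_eq_false_of_lt (by omega), Nat.testBit_eq_false_of_lt (by omega)]

/-- Labels given by a code. -/
def clab (L : ℕ) : ℕ ⊕ Fin 5 × Fin 3 → ℕ
  | Sum.inl p => dig L p
  | Sum.inr (z, c) => dig L (cpos z c)

lemma gam_inv {t m L : ℕ} (h : certOK t m L) (ε : Fin 5 → Bool) (w b) :
    clab L (node (fun i b => pt t i (b ^^ ε i)) w b) =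
      clab L (node (fun i b => pt t i (b ^^ ε i)) (qG w) (b ^^ gam ε m w)) := by
  rcases w with i | ⟨i, c⟩
  · have := (h.1 i (b ^^ ε i)).1
    simp only [node, clab, gam, mbit, sbit, qG, this]
    congr 3
    cases b <;> cases ε i <;> cases m.testBit i.val <;> rfl
  · fin_cases c
    · have := (h.1 (i - 1) (b ^^ m.testBit (5 + (i - 1).val))).2
      simp only [node, clab, gam, mbit, sbit, qG, Fin.zero_eta, Bool.xor_false, this]
      simp
    · have := (h.1 i b).2
      simp only [node, clab, gam, mbit, sbit, qG, Fin.mk_one, Bool.xor_false, this]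
    · have := (h.1 i (b ^^ m.testBit i.val)).1
      simp only [node, clab, gam, mbit, sbit, qG, Fin.reduceFinMk, Bool.xor_false]
      rw [show (b ^^ (m.testBit i.val ^^ ε i) ^^ ε i) = (b ^^ m.testBit i.val) by
        cases b <;> cases ε i <;> cases m.testBit i.val <;> rfl, this]
      simp

variable {O : Type*} {u : Fin 5 → O} {opo : O × Fin 3 → O × Fin 3} {βo : O × Fin 3 → Bool}

open scoped Classical in
/-- Mask of the pairs of meeting paths. -/
noncomputable def meetMask (u : Fin 5 → O) (opo : O × Fin 3 → O × Fin 3) (βo : O × Fin 3 → Bool)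
    (P : Fin 5 → Bool → ℕ) : ℕ := enc (prs.map fun p => decide (Meet u opo βo P p.1 p.2))

lemma fmask_meet {P : Fin 5 → Bool → ℕ} (l : ℕ → ℕ) :
    fmask l &&& meetMask u opo βo P = 0 ↔
      ∀ p ∈ prs, l p.1 = l p.2 → ¬ Meet u opo βo P p.1 p.2 := by
  classical
  rw [fmask, meetMask, enc_and, enc_eq_zero]
  refine forall₂_congr fun p _ => ?_
  rw [Bool.and_eq_false_iff, decide_eq_false_iff_not, ← Bool.not_eq_true, Nat.beq_eq]
  tauto

lemma g_side (Ho : Outer u opo) [Finite O] {T : ℕ × List (ℕ × ℕ)} (hT : T ∈ certs)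
    (ε : Fin 5 → Bool) (hP : IsPath u opo βo fun i b => pt T.1 i (b ^^ ε i))
    (hv : Valid opo βo) :
    T.2.countP (fun c => fmask (dig c.2) &&&
        meetMask u opo βo (fun i b => pt T.1 i (b ^^ ε i)) = 0) ≤
      {γ : Fin 5 ⊕ Fin 5 × Fin 3 → Bool | (∀ w, γ (qG w) = γ w) ∧
        Valid (gop u opo qG) (gbit u βo γ)}.ncard := by
  classical
  obtain ⟨hpt, hnd, hc⟩ := certs_ok T hT
  obtain ⟨M, hM⟩ : ∃ M, M = meetMask u opo βo (fun i b => pt T.1 i (b ^^ ε i)) := ⟨_, rfl⟩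
  rw [← hM, List.countP_eq_length_filter]
  obtain ⟨F, hF⟩ : ∃ F, F = T.2.filter fun c => decide (fmask (dig c.2) &&& M = 0) := ⟨_, rfl⟩
  rw [← hF]
  have hFsub : F.Sublist T.2 := by rw [hF]; exact List.filter_sublist
  have hnd' : (F.map fun c => gam ε c.1).Nodup := by
    have h1 : (F.map Prod.fst).Nodup := hnd.sublist (hFsub.map _)
    rw [show (F.map fun c => gam ε c.1) = (F.map Prod.fst).map (gam ε) by simp]
    refine List.Nodup.map_on ?_ h1
    intro x hx y hy hxy
    obtain ⟨c, hcF, rfl⟩ := List.mem_map.1 hx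
    obtain ⟨c', hcF', rfl⟩ := List.mem_map.1 hy
    exact gam_inj ε _ _ (hc c (hFsub.subset hcF)).2.2 (hc c' (hFsub.subset hcF')).2.2 hxy
  have hlen : F.length = (F.map fun c => gam ε c.1).toFinset.card := by
    rw [List.toFinset_card_of_nodup hnd', List.length_map]
  rw [hlen, ← Set.ncard_coe_finset]
  refine Set.ncard_le_ncard ?_ (Set.toFinite _)
  intro γ hγ
  simp only [List.coe_toFinset, List.mem_map, Set.mem_ofPred_eq] at hγ
  obtain ⟨c, hcF, rfl⟩ := hγ
  refine ⟨gam_sym ε c.1, ?_⟩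
  have hcc := hc c (hFsub.subset hcF)
  have hmask : fmask (dig c.2) &&& M = 0 := by
    rw [hF] at hcF
    exact of_decide_eq_true (List.mem_filter.1 hcF).2
  rw [hM, fmask_meet] at hmask
  refine valid_of Ho hP hv (clab c.2) (gam_inv hcc ε) ?_ ?_
  · intro z c1 c2 h
    exact hcc.2.1 z c1 c2 h
  · intro i b i' b' h hne hmeet
    rcases prs_mem _ (hpt.1 i (b ^^ ε i)) _ (hpt.1 i' (b' ^^ ε i')) hne with hp | hp
    · exact hmask _ hp h hmeet
    · exact hmask _ hp h.symm hmeet.symm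

lemma neq_equiv {J : Type*} (P : Fin 5 → Bool → ℕ)
    (q : Fin 5 ⊕ J × Fin 3 → Fin 5 ⊕ J × Fin 3) (γ : Fin 5 ⊕ J × Fin 3 → Bool) :
    Equivalence fun p p' : ℕ => NEq P q γ (Sum.inl p) (Sum.inl p') :=
  ⟨fun _ => Relation.EqvGen.refl _, fun h => Relation.EqvGen.symm _ _ h,
    fun h h' => Relation.EqvGen.trans _ _ _ h h'⟩

/-- The quadruple of bits of an inner bit function. -/
def quadOf (ε : Fin 5 → Bool) (a : Fin 10) (γ : Fin 5 ⊕ Unit × Fin 3 → Bool) :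
    Bool × Bool × Bool × Bool :=
  (γ (Sum.inl (jkJ a)) ^^ ε (jkJ a) ^^ ε (jkK a), γ (Sum.inl (jkM a 0)) ^^ ε (jkM a 0),
    γ (Sum.inl (jkM a 1)) ^^ ε (jkM a 1), γ (Sum.inl (jkM a 2)) ^^ ε (jkM a 2))

lemma jlinks_sound {T : ℕ × List (ℕ × ℕ)} (hT : T ∈ certs) (ε : Fin 5 → Bool) (a : Fin 10)
    (γ : Fin 5 ⊕ Unit × Fin 3 → Bool) :
    ∀ e ∈ jlinks (plist T.1 a) (quadOf ε a γ),
      NEq (fun i b => pt T.1 i (b ^^ ε i)) (qJ a) γ (Sum.inl e.1) (Sum.inl e.2) ∧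
        e.1 < 5 ∧ e.2 < 5 := by
  obtain ⟨hpt, -, -⟩ := certs_ok T hT
  have hj : ∀ b, NEq (fun i b => pt T.1 i (b ^^ ε i)) (qJ a) γ (Sum.inl (pt T.1 (jkJ a) b))
      (Sum.inl (pt T.1 (jkK a) (b ^^ (γ (Sum.inl (jkJ a)) ^^ ε (jkJ a) ^^ ε (jkK a))))) := by
    intro b
    refine Relation.EqvGen.rel _ _ ⟨Sum.inl (jkJ a), b ^^ ε (jkJ a), ?_, ?_⟩
    · simp [node]
    · rw [qJ_j]
      simp only [node]
      congr 2
      cases b <;> cases ε (jkJ a) <;> cases ε (jkK a) <;> cases γ (Sum.inl (jkJ a)) <;> rfl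
  have hm : ∀ c b, NEq (fun i b => pt T.1 i (b ^^ ε i)) (qJ a) γ
      (Sum.inl (pt T.1 (jkM a c) (b ^^ (γ (Sum.inl (jkM a c)) ^^ ε (jkM a c)))))
      (Sum.inr ((), cor c b)) := by
    intro c b
    refine Relation.EqvGen.rel _ _ ⟨Sum.inl (jkM a c), b ^^ γ (Sum.inl (jkM a c)), ?_, ?_⟩
    · simp [node]
    · rw [qJ_m]
      simp [node]
  have hmm : ∀ c b c' b', cor c b = cor c' b' → NEq (fun i b => pt T.1 i (b ^^ ε i)) (qJ a) γ
      (Sum.inl (pt T.1 (jkM a c) (b ^^ (γ (Sum.inl (jkM a c)) ^^ ε (jkM a c)))))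
      (Sum.inl (pt T.1 (jkM a c') (b' ^^ (γ (Sum.inl (jkM a c')) ^^ ε (jkM a c'))))) := by
    intro c b c' b' h
    have h1 := hm c b
    rw [h] at h1
    exact Relation.EqvGen.trans _ _ _ h1 (Relation.EqvGen.symm _ _ (hm c' b'))
  have h0 := hj false
  have h1 := hj true
  have h2 := hmm 2 true 1 false rfl
  have h3 := hmm 0 true 2 false rfl
  have h4 := hmm 1 true 0 false rfl
  have hb : ∀ (i : Fin 5) (g : Bool), (bif g then pt T.1 i true else pt T.1 i false) =
      pt T.1 i (false ^^ g) := by intro i g; cases g <;> rfl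
  have hb' : ∀ (i : Fin 5) (g : Bool), (bif g then pt T.1 i false else pt T.1 i true) =
      pt T.1 i (true ^^ g) := by intro i g; cases g <;> rfl
  intro e he
  simp only [plist, jlinks, quadOf, List.mem_cons, List.not_mem_nil, or_false, hb, hb'] at he
  rcases he with rfl | rfl | rfl | rfl | rfl
  · exact ⟨h0, hpt.1 _ _, hpt.1 _ _⟩
  · exact ⟨h1, hpt.1 _ _, hpt.1 _ _⟩
  · exact ⟨h2, hpt.1 _ _, hpt.1 _ _⟩
  · exact ⟨h3, hpt.1 _ _, hpt.1 _ _⟩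
  · exact ⟨h4, hpt.1 _ _, hpt.1 _ _⟩

lemma j_side (Ho : Outer u opo) (Hb : OBit u opo βo) {T : ℕ × List (ℕ × ℕ)} (hT : T ∈ certs)
    (ε : Fin 5 → Bool) (hP : IsPath u opo βo fun i b => pt T.1 i (b ^^ ε i)) (a : Fin 10) :
    {γ : Fin 5 ⊕ Unit × Fin 3 → Bool | (∀ w, γ (qJ a w) = γ w) ∧
        Valid (gop u opo (qJ a)) (gbit u βo γ)}.ncard ≤
    quads.countP (fun g => jmask (plist T.1 a) g &&&
        meetMask u opo βo (fun i b => pt T.1 i (b ^^ ε i)) = 0) := by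
  classical
  rw [List.countP_eq_length_filter]
  refine le_trans ?_ (List.toFinset_card_le _)
  rw [← Set.ncard_coe_finset]
  refine Set.ncard_le_ncard_of_injOn (quadOf ε a) ?_ ?_ (Set.toFinite _)
  · rintro γ ⟨-, hv⟩
    simp only [List.coe_toFinset, List.mem_filter, Set.mem_ofPred_eq]
    refine ⟨mem_quads _ _ _ _, ?_⟩
    rw [decide_eq_true_iff, jmask, forceN_eq, fmask_meet]
    intro p hp h
    obtain ⟨h1, h2, h3⟩ := prs_lt p hp
    exact valid_imp Ho Hb hP hv h3 (closure5_sound _ (neq_equiv _ (qJ a) γ) _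
      (jlinks_sound hT ε a γ) _ _ h1 h2 h)
  · rintro γ ⟨hs, -⟩ γ' ⟨hs', -⟩ h
    simp only [quadOf, Prod.mk.injEq, Bool.xor_left_inj] at h
    obtain ⟨h0, h1, h2, h3⟩ := h
    have hmc : ∀ c, γ (Sum.inl (jkM a c)) = γ' (Sum.inl (jkM a c)) := by
      intro c; fin_cases c
      · exact h1
      · exact h2
      · exact h3
    funext w
    rcases w with i | ⟨⟨⟩, c⟩
    · rcases (jk_spec a).2.2.2 i with rfl | rfl | ⟨c, rfl⟩
      · exact h0
      · rw [← qJ_j, hs, hs', h0]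
      · exact hmc c
    · rw [← qJ_m, hs, hs', hmc c]

theorem local_ineq [Finite O] (Ho : Outer u opo) (Hb : OBit u opo βo) :
    ∑ a, jkW a * {γ : Fin 5 ⊕ Unit × Fin 3 → Bool | (∀ w, γ (qJ a w) = γ w) ∧
        Valid (gop u opo (qJ a)) (gbit u βo γ)}.ncard ≤
    4 * {γ : Fin 5 ⊕ Fin 5 × Fin 3 → Bool | (∀ w, γ (qG w) = γ w) ∧
        Valid (gop u opo qG) (gbit u βo γ)}.ncard := by
  classical
  by_cases hv : Valid opo βo
  · obtain ⟨π, hπ1, hπ2, hπ⟩ := exists_matching Ho Hb hv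
    obtain ⟨T, hT, ε, hε⟩ := exists_normal π hπ1 hπ2
    have hP : IsPath u opo βo fun i b => pt T.1 i (b ^^ ε i) := by
      intro i b i' b'
      exact (hε (i, b) (i', b')).trans (hπ (i, b) (i', b')).symm
    have hF : meetMask u opo βo (fun i b => pt T.1 i (b ^^ ε i)) &&& forced T.1 = forced T.1 := by
      rw [meetMask, forced, enc_and]
      congr 1
      refine List.map_congr_left fun p _ => ?_
      rw [Bool.and_eq_right_iff_imp]
      intro h
      rw [List.any_eq_true] at h
      obtain ⟨i, -, h⟩ := h
      have hm : Meet u opo βo (fun i b => pt T.1 i (b ^^ ε i)) (pt T.1 i false)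
          (pt T.1 i true) :=
        ⟨i, ε i, i, !ε i, u i, cor 2 (ε i), cor 2 (!ε i), by simp, by simp, CEq.refl _, CEq.refl _⟩
      rw [decide_eq_true_iff]
      simp only [Bool.or_eq_true, Bool.and_eq_true, beq_iff_eq] at h
      rcases h with ⟨h1, h2⟩ | ⟨h1, h2⟩
      · rw [← h1, ← h2]; exact hm
      · rw [← h1, ← h2]; exact hm.symm
    have hM : meetMask u opo βo (fun i b => pt T.1 i (b ^^ ε i)) < 1024 :=
      lt_of_lt_of_le (enc_lt _) (by simp [prs])
    refine le_trans (Finset.sum_le_sum fun a _ =>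
      Nat.mul_le_mul_left _ (j_side Ho Hb hT ε hP a)) ?_
    refine le_trans (ineq_sound T hT _ hM hF) ?_
    exact Nat.mul_le_mul_left _ (g_side Ho hT ε hP hv)
  · rw [Finset.sum_eq_zero]
    · exact Nat.zero_le _
    · intro a _
      have : {γ : Fin 5 ⊕ Unit × Fin 3 → Bool | (∀ w, γ (qJ a w) = γ w) ∧
          Valid (gop u opo (qJ a)) (gbit u βo γ)} = ∅ := by
        ext γ
        simp only [Set.mem_ofPred_eq, Set.mem_empty_iff_false, iff_false]
        rintro ⟨-, h⟩
        exact hv (outerValid Ho Hb h)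
      rw [this, Set.ncard_empty, Nat.mul_zero]

end Local


/-! ### Counting and assembly -/

section Count

variable {O J : Type*} {u : Fin 5 → O} {opo : O × Fin 3 → O × Fin 3}
  {q : Fin 5 ⊕ J × Fin 3 → Fin 5 ⊕ J × Fin 3}

lemma opo_out (Ho : Outer u opo) {x c} (h : ∀ i, (x, c) ≠ (u i, (2 : Fin 3))) :
    ∀ i, ((opo (x, c)).1, (opo (x, c)).2) ≠ (u i, (2 : Fin 3)) := by
  intro i hi
  have h1 : opo (opo (x, c)) = opo (x, c) := (Ho.fix _).2 ⟨i, hi⟩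
  rw [Ho.invol] at h1
  obtain ⟨i', h2⟩ := (Ho.fix (x, c)).1 h1.symm
  exact h i' h2

lemma gop_invol (Ho : Outer u opo) (hq : ∀ w, q (q w) = w) (d) :
    gop u opo q (gop u opo q d) = d := by
  rcases dart_cases u d with ⟨w, rfl⟩ | ⟨x, c, rfl, h⟩
  · rw [gop_emb Ho.uinj, gop_emb Ho.uinj, hq]
  · rw [gop_out h, gop_out (opo_out Ho h)]
    simp only [Prod.mk.eta, Ho.invol]

open scoped Classical in
lemma fiber_count [Finite O] [Finite J] (I : Fintype (O × Fin 3 → Bool)) (Ho : Outer u opo) :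
    {β : (O ⊕ J) × Fin 3 → Bool | (∀ d, β (gop u opo q d) = β d) ∧
      Valid (gop u opo q) β}.ncard =
    ∑ βo ∈ Finset.univ.filter (fun βo : O × Fin 3 → Bool => OBit u opo βo),
      {γ : Fin 5 ⊕ J × Fin 3 → Bool | (∀ w, γ (q w) = γ w) ∧
        Valid (gop u opo q) (gbit u βo γ)}.ncard := by
  have hfin : ∀ s : Set (Fin 5 ⊕ J × Fin 3 → Bool), s.Finite := fun s => Set.toFinite s
  have hfin2 : ∀ s : Set ((O ⊕ J) × Fin 3 → Bool), s.Finite := fun s => Set.toFinite s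
  simp_rw [fun βo : O × Fin 3 → Bool => Set.ncard_eq_toFinset_card
    {γ : Fin 5 ⊕ J × Fin 3 → Bool | (∀ w, γ (q w) = γ w) ∧
        Valid (gop u opo q) (gbit u βo γ)} (hfin _)]
  rw [Set.ncard_eq_toFinset_card _ (hfin2 _), ← Finset.card_sigma]
  symm
  refine Finset.card_bij (fun p _ => gbit u p.1 p.2) ?_ ?_ ?_
  · rintro ⟨βo, γ⟩ h
    simp only [Finset.mem_sigma, Finset.mem_filter, Finset.mem_univ, true_and,
      Set.Finite.mem_toFinset, Set.mem_ofPred_eq] at h ⊢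
    obtain ⟨hb, hs, hv⟩ := h
    refine ⟨fun d => ?_, hv⟩
    rcases dart_cases u d with ⟨w, rfl⟩ | ⟨x, c, rfl, h⟩
    · rw [gop_emb Ho.uinj, gbit_emb Ho.uinj, gbit_emb Ho.uinj, hs]
    · rw [gop_out h, gbit_out h, gbit_out (opo_out Ho h)]
      exact hb.sym _
  · rintro ⟨βo, γ⟩ h ⟨βo', γ'⟩ h' he
    simp only [Finset.mem_sigma, Finset.mem_filter, Finset.mem_univ, true_and] at h h'
    have h1 : γ = γ' := by
      funext w
      have := congrFun he (emb u w)
      simpa only [gbit_emb Ho.uinj] using this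
    have h2 : βo = βo' := by
      funext ⟨x, c⟩
      by_cases hp : ∃ i, (x, c) = (u i, (2 : Fin 3))
      · obtain ⟨i, hi⟩ := hp
        rw [hi, h.1.port, h'.1.port]
      · push Not at hp
        have := congrFun he (Sum.inl x, c)
        simpa only [gbit_out hp] using this
    rw [h1, h2]
  · intro β hβ
    simp only [Set.Finite.mem_toFinset, Set.mem_ofPred_eq] at hβ
    obtain ⟨hs, hv⟩ := hβ
    set βo : O × Fin 3 → Bool := fun d =>
      if ∃ i, d = (u i, (2 : Fin 3)) then false else β (Sum.inl d.1, d.2) with hβo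
    set γ : Fin 5 ⊕ J × Fin 3 → Bool := fun w => β (emb u w) with hγ
    have hg : gbit u βo γ = β := by
      funext d
      rcases dart_cases u d with ⟨w, rfl⟩ | ⟨x, c, rfl, h⟩
      · rw [gbit_emb Ho.uinj]
      · rw [gbit_out h, hβo]
        exact if_neg (by push Not; exact h)
    refine ⟨⟨βo, γ⟩, ?_, hg⟩
    simp only [Finset.mem_sigma, Finset.mem_filter, Finset.mem_univ, true_and,
      Set.Finite.mem_toFinset, Set.mem_ofPred_eq]
    refine ⟨⟨?_, ?_⟩, ?_, ?_⟩
    · rintro ⟨x, c⟩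
      by_cases hp : ∃ i, (x, c) = (u i, (2 : Fin 3))
      · rw [(Ho.fix _).2 hp]
      · push Not at hp
        have h1 := opo_out Ho hp
        rw [hβo]
        simp only
        rw [if_neg (by push Not; exact h1), if_neg (by push Not; exact hp), ← hs (Sum.inl x, c),
          gop_out hp]
    · intro i
      exact if_pos ⟨i, rfl⟩
    · intro w
      rw [hγ]
      simp only
      rw [← gop_emb (opo := opo) (q := q) Ho.uinj w, hs]
    · rw [hg]; exact hv

end Count

lemma qJ_invol (a w) : qJ a (qJ a w) = w := by
  rcases w with i | ⟨⟨⟩, c⟩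
  · rcases (jk_spec a).2.2.2 i with rfl | rfl | ⟨c, rfl⟩
    · rw [qJ_j, qJ_k]
    · rw [qJ_k, qJ_j]
    · rw [qJ_m]; rfl
  · exact qJ_m a c

theorem global_ineq {O V W : Type*} [Fintype O] {u : Fin 5 → O} {opo : O × Fin 3 → O × Fin 3}
    (Ho : Outer u opo) {G : SimpleGraph V} {e : O ⊕ Fin 5 ≃ V}
    (MG : Model G e (gop u opo qG)) {G' : Fin 10 → SimpleGraph W} {e' : O ⊕ Unit ≃ W}
    (MG' : ∀ a, Model (G' a) e' (gop u opo (qJ a))) :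
    ∑ a, jkW a * nu (G' a) ≤ 4 * nu G := by
  classical
  rw [nu_eq MG, fiber_count inferInstance Ho]
  simp_rw [fun a => nu_eq (MG' a), fiber_count (J := Unit) (inferInstance) Ho, Finset.mul_sum]
  rw [Finset.sum_comm]
  refine Finset.sum_le_sum fun βo hβo => ?_
  exact local_ineq Ho (Finset.mem_filter.1 hβo).2

lemma exists_label {V : Type*} {S : Set V} (h : S.ncard = 3) {s : V} (hs : s ∈ S) :
    ∃ f : Fin 3 → V, Function.Injective f ∧ (∀ w, w ∈ S ↔ ∃ c, f c = w) ∧ f 2 = s := by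
  have hfin : S.Finite := Set.finite_of_ncard_ne_zero (by omega)
  have h2 : (S \ {s}).ncard = 2 := by
    rw [Set.ncard_sdiff_singleton_of_mem hs, h]
  obtain ⟨a, b, hab, hS⟩ := Set.ncard_eq_two.1 h2
  have ha : a ∈ S \ {s} := by rw [hS]; simp
  have hb : b ∈ S \ {s} := by rw [hS]; simp
  refine ⟨![a, b, s], ?_, ?_, rfl⟩
  · have h1 : a ≠ s := ha.2
    have h2 : b ≠ s := hb.2
    intro c c' hc
    fin_cases c <;> fin_cases c' <;> simp_all
  · intro w
    constructor
    · intro hw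
      by_cases hws : w = s
      · exact ⟨2, hws.symm⟩
      · have : w ∈ S \ {s} := ⟨hw, hws⟩
        rw [hS] at this
        rcases this with rfl | rfl
        · exact ⟨0, rfl⟩
        · exact ⟨1, rfl⟩
    · rintro ⟨c, rfl⟩
      fin_cases c
      · exact ha.1
      · exact hb.1
      · exact hs


lemma model_of {Z W : Type*} {H : SimpleGraph W} {e : Z ≃ W} {op : Z × Fin 3 → Z × Fin 3}
    (hop : ∀ d, op (op d) = d) (F : Z → Fin 3 → W) (hF : ∀ z c, e (op (z, c)).1 = F z c)
    (hinj : ∀ z, Function.Injective (F z)) (hadj : ∀ z w, H.Adj (e z) w ↔ ∃ c, F z c = w) :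
    Model H e op where
  invol := hop
  adj x x' := by
    rw [hadj]
    refine exists_congr fun c => ?_
    rw [← hF, e.apply_eq_iff_eq]
  inj x y y' h := by
    apply hinj x
    rw [← hF, ← hF, h]

lemma fin5_ne : ∀ i : Fin 5, i - 1 ≠ i + 1 ∧ i - 1 ≠ i ∧ i + 1 ≠ i := by decide

lemma cycle_nbrs {V : Type*} [Fintype V] {G : SimpleGraph V} (hcubic : IsCubic G)
    {v u : Fin 5 → V} (hvinj : Function.Injective v)
    (hcycle : ∀ i : Fin 5, G.Adj (v i) (v (i + 1))) (huadj : ∀ i : Fin 5, G.Adj (v i) (u i))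
    (huv : ∀ i j : Fin 5, u i ≠ v j) (i : Fin 5) :
    Function.Injective ![v (i - 1), v (i + 1), u i] ∧
      ∀ w, G.Adj (v i) w ↔ ∃ c, ![v (i - 1), v (i + 1), u i] c = w := by
  classical
  have h1 : v (i - 1) ≠ v (i + 1) := fun h => (fin5_ne i).1 (hvinj h)
  have hinj : Function.Injective ![v (i - 1), v (i + 1), u i] := by
    have h2 := huv i (i - 1)
    have h3 := huv i (i + 1)
    intro c c' hc
    fin_cases c <;> fin_cases c' <;> simp_all [Ne.symm]
  refine ⟨hinj, ?_⟩
  have hsub : Set.range ![v (i - 1), v (i + 1), u i] ⊆ G.neighborSet (v i) := by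
    rintro _ ⟨c, rfl⟩
    fin_cases c
    · have := (hcycle (i - 1)).symm
      rwa [sub_add_cancel] at this
    · exact hcycle i
    · exact huadj i
  have heq : Set.range ![v (i - 1), v (i + 1), u i] = G.neighborSet (v i) := by
    refine Set.eq_of_subset_of_ncard_le hsub ?_ (Set.toFinite _)
    rw [hcubic, ← Set.image_univ, Set.ncard_image_of_injective _ hinj, Set.ncard_univ]
    simp
  intro w
  rw [← mem_neighborSet, ← heq]
  rfl

section Assembly

variable {V : Type*} [Fintype V] {G : SimpleGraph V} {v u : Fin 5 → V}

/-- The vertices outside the 5-cycle. -/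
abbrev Out (v : Fin 5 → V) : Type _ := {x : V // ∀ j : Fin 5, x ≠ v j}

/-- Labelled neighbourhoods of the outer vertices. -/
structure Lab (G : SimpleGraph V) (v : Fin 5 → V) (u' : Fin 5 → Out v)
    (f : Out v → Fin 3 → V) : Prop where
  inj : ∀ x, Function.Injective (f x)
  adj : ∀ x w, G.Adj x.1 w ↔ ∃ c, f x c = w
  port : ∀ i, f (u' i) 2 = v i
  out : ∀ x c i, f x c = v i → (x, c) = (u' i, 2)

lemma exists_lab (hcubic : IsCubic G) (hvinj : Function.Injective v)
    (hcycle : ∀ i : Fin 5, G.Adj (v i) (v (i + 1))) (huadj : ∀ i : Fin 5, G.Adj (v i) (u i))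
    (huinj : Function.Injective u) (huv : ∀ i j : Fin 5, u i ≠ v j) :
    ∃ f, Lab G v (fun i => ⟨u i, huv i⟩) f := by
  classical
  have hex : ∀ x : Out v, ∃ f : Fin 3 → V, Function.Injective f ∧
      (∀ w, G.Adj x.1 w ↔ ∃ c, f c = w) ∧ ∀ i, x.1 = u i → f 2 = v i := by
    intro x
    by_cases hx : ∃ i, x.1 = u i
    · obtain ⟨i, hi⟩ := hx
      have hm : v i ∈ G.neighborSet x.1 := by rw [hi]; exact (huadj i).symm
      obtain ⟨f, h1, h2, h3⟩ := exists_label (hcubic x.1) hm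
      refine ⟨f, h1, h2, fun i' hi' => ?_⟩
      rw [h3, huinj (hi.symm.trans hi')]
    · obtain ⟨s, hs⟩ : (G.neighborSet x.1).Nonempty := by
        apply Set.nonempty_of_ncard_ne_zero
        rw [hcubic]; norm_num
      obtain ⟨f, h1, h2, -⟩ := exists_label (hcubic x.1) hs
      exact ⟨f, h1, h2, fun i hi => absurd ⟨i, hi⟩ hx⟩
  choose f h1 h2 h3 using hex
  refine ⟨f, h1, h2, fun i => h3 _ i rfl, ?_⟩
  intro x c i h
  have hadj : G.Adj (v i) x.1 := ((h2 x (v i)).2 ⟨c, h⟩).symm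
  obtain ⟨c', hc'⟩ := ((cycle_nbrs hcubic hvinj hcycle huadj huv i).2 x.1).1 hadj
  have hxu : x.1 = u i := by
    fin_cases c'
    · exact absurd hc'.symm (x.2 _)
    · exact absurd hc'.symm (x.2 _)
    · exact hc'.symm
  have hc2 : c = 2 := h1 x (h.trans (h3 x i hxu).symm)
  rw [hc2]
  exact Prod.ext (Subtype.ext hxu) rfl

lemma exists_opo {u' : Fin 5 → Out v} {f : Out v → Fin 3 → V} (hu' : Function.Injective u')
    (L : Lab G v u' f) : ∃ opo : Out v × Fin 3 → Out v × Fin 3, Outer u' opo ∧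
      ∀ x c, (∀ i, (x, c) ≠ (u' i, (2 : Fin 3))) → (opo (x, c)).1.1 = f x c := by
  classical
  have hex : ∀ d : Out v × Fin 3, ∃ d' : Out v × Fin 3,
      ((∃ i, d = (u' i, 2)) → d' = d) ∧
      ((∀ i, d ≠ (u' i, 2)) → d'.1.1 = f d.1 d.2 ∧ f d'.1 d'.2 = d.1.1) := by
    rintro ⟨x, c⟩
    by_cases hp : ∃ i, (x, c) = (u' i, (2 : Fin 3))
    · exact ⟨(x, c), fun _ => rfl, fun h => absurd hp (by push Not; exact h)⟩
    · push Not at hp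
      have hy : ∀ j, f x c ≠ v j := fun j hj => hp j (L.out x c j hj)
      have hadj : G.Adj (f x c) x.1 := ((L.adj x (f x c)).2 ⟨c, rfl⟩).symm
      obtain ⟨c', hc'⟩ := (L.adj ⟨f x c, hy⟩ x.1).1 hadj
      exact ⟨(⟨f x c, hy⟩, c'), fun ⟨i, hi⟩ => absurd hi (hp i), fun _ => ⟨rfl, hc'⟩⟩
  choose opo hport hout using hex
  refine ⟨opo, ⟨hu', ?_, ?_⟩, fun x c h => (hout _ h).1⟩
  · intro d
    by_cases hp : ∃ i, d = (u' i, (2 : Fin 3))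
    · rw [hport d hp, hport d hp]
    · push Not at hp
      obtain ⟨h1, h2⟩ := hout d hp
      have hp' : ∀ i, opo d ≠ (u' i, (2 : Fin 3)) := by
        intro i hi
        rw [hi, L.port] at h2
        exact d.1.2 i h2.symm
      obtain ⟨h3, h4⟩ := hout (opo d) hp'
      have h5 : (opo (opo d)).1 = d.1 := Subtype.ext (h3.trans h2)
      refine Prod.ext h5 ?_
      rw [h5, h1] at h4
      exact L.inj _ h4
  · intro d
    refine ⟨fun h => ?_, hport d⟩
    by_contra hp
    push Not at hp
    obtain ⟨h1, h2⟩ := hout d hp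
    rw [h] at h1
    exact G.irrefl ((L.adj d.1 d.1.1).2 ⟨d.2, h1.symm⟩)

/-- The vertices of `G`, split. -/
noncomputable def eG (hvinj : Function.Injective v) : Out v ⊕ Fin 5 ≃ V :=
  Equiv.ofBijective (Sum.elim Subtype.val v) (by
    constructor
    · rintro (x | i) (y | j) h
      · exact congrArg _ (Subtype.ext h)
      · exact absurd h (x.2 j)
      · exact absurd h.symm (y.2 i)
      · exact congrArg _ (hvinj h)
    · intro x
      by_cases h : ∃ j, x = v j
      · obtain ⟨j, rfl⟩ := h
        exact ⟨Sum.inr j, rfl⟩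
      · push Not at h
        exact ⟨Sum.inl ⟨x, h⟩, rfl⟩)

lemma modelG (hcubic : IsCubic G) (hvinj : Function.Injective v)
    (hcycle : ∀ i : Fin 5, G.Adj (v i) (v (i + 1))) (huadj : ∀ i : Fin 5, G.Adj (v i) (u i))
    (huv : ∀ i j : Fin 5, u i ≠ v j) {u' : Fin 5 → Out v} (hu : ∀ i, (u' i).1 = u i)
    {f : Out v → Fin 3 → V}
    (L : Lab G v u' f) {opo : Out v × Fin 3 → Out v × Fin 3} (Ho : Outer u' opo)
    (hopo : ∀ x c, (∀ i, (x, c) ≠ (u' i, (2 : Fin 3))) → (opo (x, c)).1.1 = f x c) :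
    Model G (eG hvinj) (gop u' opo qG) := by
  have hn := cycle_nbrs hcubic hvinj hcycle huadj huv
  refine model_of (gop_invol Ho qG_invol)
    (fun z => match z with
      | Sum.inl x => f x
      | Sum.inr i => ![v (i - 1), v (i + 1), u i]) ?_ ?_ ?_
  · rintro (x | i) c
    · by_cases hp : ∃ i, (x, c) = (u' i, (2 : Fin 3))
      · obtain ⟨i, hi⟩ := hp
        obtain ⟨rfl, rfl⟩ := Prod.mk.inj hi
        have := gop_emb (opo := opo) (q := qG) Ho.uinj (Sum.inl i)
        simp only [emb] at this
        rw [this]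
        simp only [qG, L.port]
        rfl
      · push Not at hp
        rw [gop_out hp]
        exact hopo x c hp
    · have := gop_emb (opo := opo) (q := qG) Ho.uinj (Sum.inr (i, c))
      simp only [emb] at this
      rw [this]
      fin_cases c
      · rfl
      · rfl
      · exact hu i
  · rintro (x | i)
    · exact L.inj x
    · exact (hn i).1
  · rintro (x | i) w
    · exact L.adj x w
    · exact (hn i).2 w

lemma modelJ (hunadj : ∀ i j : Fin 5, ¬ G.Adj (u i) (u j)) {u' : Fin 5 → Out v}
    (hu : ∀ i, (u' i).1 = u i)
    {f : Out v → Fin 3 → V}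
    (L : Lab G v u' f) {opo : Out v × Fin 3 → Out v × Fin 3} (Ho : Outer u' opo)
    (hopo : ∀ x c, (∀ i, (x, c) ≠ (u' i, (2 : Fin 3))) → (opo (x, c)).1.1 = f x c)
    (a : Fin 10) (H : SimpleGraph (Out v ⊕ Unit))
    (hH : ∀ p q, H.Adj p q ↔
      (∃ x y, p = Sum.inl x ∧ q = Sum.inl y ∧
        (G.Adj x.1 y.1 ∨ (x.1 = u (jkJ a) ∧ y.1 = u (jkK a)) ∨
          (x.1 = u (jkK a) ∧ y.1 = u (jkJ a)))) ∨
      (∃ x, p = Sum.inl x ∧ q = Sum.inr () ∧ ∃ m : Fin 5, m ≠ jkJ a ∧ m ≠ jkK a ∧ x.1 = u m) ∨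
      (∃ x, p = Sum.inr () ∧ q = Sum.inl x ∧ ∃ m : Fin 5, m ≠ jkJ a ∧ m ≠ jkK a ∧ x.1 = u m)) :
    Model H (Equiv.refl _) (gop u' opo (qJ a)) := by
  obtain ⟨hjk, hm, hmi, hall⟩ := jk_spec a
  have hux : ∀ (x : Out v) i, x.1 = u i → x = u' i := fun x i h => Subtype.ext (h.trans (hu i).symm)
  have hmc : ∀ m, m ≠ jkJ a → m ≠ jkK a → ∃ c, m = jkM a c := by
    intro m h1 h2
    rcases hall m with h | h | h
    · exact absurd h h1
    · exact absurd h h2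
    · exact h
  have gj : gop u' opo (qJ a) (Sum.inl (u' (jkJ a)), 2) = (Sum.inl (u' (jkK a)), 2) := by
    have := gop_emb (opo := opo) (q := qJ a) Ho.uinj (Sum.inl (jkJ a))
    rwa [qJ_j] at this
  have gk : gop u' opo (qJ a) (Sum.inl (u' (jkK a)), 2) = (Sum.inl (u' (jkJ a)), 2) := by
    have := gop_emb (opo := opo) (q := qJ a) Ho.uinj (Sum.inl (jkK a))
    rwa [qJ_k] at this
  have gm : ∀ c, gop u' opo (qJ a) (Sum.inl (u' (jkM a c)), 2) = (Sum.inr (), c) := by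
    intro c
    have := gop_emb (opo := opo) (q := qJ a) Ho.uinj (Sum.inl (jkM a c))
    rwa [qJ_m] at this
  have gw : ∀ c, gop u' opo (qJ a) (Sum.inr (), c) = (Sum.inl (u' (jkM a c)), 2) := by
    intro c
    exact gop_emb (opo := opo) (q := qJ a) Ho.uinj (Sum.inr ((), c))
  refine ⟨gop_invol Ho (qJ_invol a), ?_, ?_⟩
  · intro z z'
    simp only [Equiv.refl_apply]
    rw [hH]
    constructor
    · rintro (⟨x, y, rfl, rfl, h | ⟨h1, h2⟩ | ⟨h1, h2⟩⟩ | ⟨x, rfl, rfl, m, h1, h2, h3⟩ |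
        ⟨x, rfl, rfl, m, h1, h2, h3⟩)
      · obtain ⟨c, hc⟩ := (L.adj x y.1).1 h
        refine ⟨c, ?_⟩
        have hp : ∀ i, (x, c) ≠ (u' i, (2 : Fin 3)) := by
          intro i hi
          obtain ⟨rfl, rfl⟩ := Prod.mk.inj hi
          rw [L.port] at hc
          exact y.2 i hc.symm
        rw [gop_out hp]
        exact congrArg _ (Subtype.ext ((hopo x c hp).trans hc))
      · refine ⟨2, ?_⟩
        rw [hux x _ h1, hux y _ h2, gj]
      · refine ⟨2, ?_⟩
        rw [hux x _ h1, hux y _ h2, gk]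
      · obtain ⟨c, rfl⟩ := hmc m h1 h2
        refine ⟨2, ?_⟩
        rw [hux x _ h3, gm]
      · obtain ⟨c, rfl⟩ := hmc m h1 h2
        refine ⟨c, ?_⟩
        rw [hux x _ h3, gw]
    · rintro ⟨c, rfl⟩
      rcases z with x | ⟨⟩
      · by_cases hp : ∃ i, (x, c) = (u' i, (2 : Fin 3))
        · obtain ⟨i, hi⟩ := hp
          obtain ⟨rfl, rfl⟩ := Prod.mk.inj hi
          rcases hall i with rfl | rfl | ⟨c, rfl⟩
          · rw [gj]
            exact Or.inl ⟨_, _, rfl, rfl, Or.inr (Or.inl ⟨hu _, hu _⟩)⟩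
          · rw [gk]
            exact Or.inl ⟨_, _, rfl, rfl, Or.inr (Or.inr ⟨hu _, hu _⟩)⟩
          · rw [gm]
            exact Or.inr (Or.inl ⟨_, rfl, rfl, _, (hm c).1, (hm c).2, hu _⟩)
        · push Not at hp
          rw [gop_out hp]
          refine Or.inl ⟨_, _, rfl, rfl, Or.inl ?_⟩
          rw [L.adj, hopo x c hp]
          exact ⟨c, rfl⟩
      · rw [gw]
        exact Or.inr (Or.inr ⟨_, rfl, rfl, _, (hm c).1, (hm c).2, hu _⟩)
  · have hmix : ∀ x c i, (∀ i, (x, c) ≠ (u' i, (2 : Fin 3))) → x = u' i →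
        (gop u' opo (qJ a) (Sum.inl x, c)).1 ≠ (gop u' opo (qJ a) (Sum.inl (u' i), 2)).1 := by
      intro x c i hp hx h
      have hadj : G.Adj x.1 (opo (x, c)).1.1 := by
        rw [L.adj, hopo x c hp]
        exact ⟨c, rfl⟩
      rw [gop_out hp] at h
      rcases hall i with rfl | rfl | ⟨c', rfl⟩
      · rw [gj] at h
        rw [Sum.inl.inj h, hx, hu, hu] at hadj
        exact hunadj _ _ hadj
      · rw [gk] at h
        rw [Sum.inl.inj h, hx, hu, hu] at hadj
        exact hunadj _ _ hadj
      · rw [gm] at h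
        cases h
    rintro (x | ⟨⟩) c c' h
    · by_cases hp : ∃ i, (x, c) = (u' i, (2 : Fin 3)) <;>
        by_cases hp' : ∃ i, (x, c') = (u' i, (2 : Fin 3))
      · obtain ⟨i, hi⟩ := hp
        obtain ⟨i', hi'⟩ := hp'
        exact (Prod.mk.inj hi).2.trans (Prod.mk.inj hi').2.symm
      · obtain ⟨i, hi⟩ := hp
        push Not at hp'
        obtain ⟨h1, h2⟩ := Prod.mk.inj hi
        subst h2
        refine absurd h.symm ?_
        have := hmix x c' i hp' h1
        rwa [← h1] at this
      · obtain ⟨i, hi⟩ := hp'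
        push Not at hp
        obtain ⟨h1, h2⟩ := Prod.mk.inj hi
        subst h2
        refine absurd h ?_
        have := hmix x c i hp h1
        rwa [← h1] at this
      · push Not at hp hp'
        rw [gop_out hp, gop_out hp'] at h
        have := congrArg Subtype.val (Sum.inl.inj h)
        rw [hopo x c hp, hopo x c' hp'] at this
        exact L.inj x this
    · rw [gw, gw] at h
      exact hmi _ _ (Ho.uinj (Sum.inl.inj h))

end Assembly

/-- Reducing a 5-cycle `v₀v₁v₂v₃v₄` in a cyclically 4-edge-connected cubic graph with no
3- or 4-cycles, allowing all ten (possibly crossing) replacements: for each 2-element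
subset `{j, k}` of the indices, `G' j k` is obtained by deleting the cycle, adding a new
vertex `w` adjacent to the three `u m` with `m ∉ {j, k}` and adding the edge `u j — u k`.
Then `ν(G) ≥ (15/4) · min_{j ≠ k} ν(G' j k)`. -/
theorem stmt13 {V : Type*} [Fintype V] (G : SimpleGraph V)
    (hcyc : CyclicallyFourEdgeConnected G) (hcubic : IsCubic G)
    (hC3 : ∀ a b c : V, ¬(G.Adj a b ∧ G.Adj b c ∧ G.Adj c a))
    (hC4 : ∀ a b c d : V, a ≠ c → b ≠ d →
      ¬(G.Adj a b ∧ G.Adj b c ∧ G.Adj c d ∧ G.Adj d a))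
    (v u : Fin 5 → V)
    (hvinj : Function.Injective v)
    (hcycle : ∀ i : Fin 5, G.Adj (v i) (v (i + 1)))
    (huadj : ∀ i : Fin 5, G.Adj (v i) (u i))
    (huinj : Function.Injective u)
    (huv : ∀ i j : Fin 5, u i ≠ v j)
    (hunadj : ∀ i j : Fin 5, ¬ G.Adj (u i) (u j))
    (G' : Fin 5 → Fin 5 → SimpleGraph ({x : V // ∀ j : Fin 5, x ≠ v j} ⊕ Unit))
    (hG' : ∀ (j k : Fin 5), j ≠ k → ∀ p q, (G' j k).Adj p q ↔
      (∃ x y, p = Sum.inl x ∧ q = Sum.inl y ∧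
        (G.Adj x.1 y.1 ∨ (x.1 = u j ∧ y.1 = u k) ∨ (x.1 = u k ∧ y.1 = u j))) ∨
      (∃ x, p = Sum.inl x ∧ q = Sum.inr () ∧ ∃ m : Fin 5, m ≠ j ∧ m ≠ k ∧ x.1 = u m) ∨
      (∃ x, p = Sum.inr () ∧ q = Sum.inl x ∧ ∃ m : Fin 5, m ≠ j ∧ m ≠ k ∧ x.1 = u m)) :
    (15 : ℚ) / 4 *
        ((⨅ p : {p : Fin 5 × Fin 5 // p.1 ≠ p.2}, nu (G' p.1.1 p.1.2) : ℕ) : ℚ) ≤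
      (nu G : ℚ) := by
  classical
  have hu' : Function.Injective fun i => (⟨u i, huv i⟩ : Out v) := by
    intro i j h
    exact huinj (congrArg Subtype.val h)
  obtain ⟨f, L⟩ := exists_lab hcubic hvinj hcycle huadj huinj huv
  obtain ⟨opo, Ho, hopo⟩ := exists_opo hu' L
  have MG := modelG hcubic hvinj hcycle huadj huv (fun _ => rfl) L Ho hopo
  have MJ := fun a => modelJ hunadj (fun _ => rfl) L Ho hopo a (G' (jkJ a) (jkK a))
    (hG' _ _ (jk_spec a).1)
  have key := global_ineq Ho MG MJ
  have hle : ∀ a, (⨅ p : {p : Fin 5 × Fin 5 // p.1 ≠ p.2}, nu (G' p.1.1 p.1.2)) ≤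
      nu (G' (jkJ a) (jkK a)) := fun a =>
    ciInf_le (OrderBot.bddBelow _)
      (⟨(jkJ a, jkK a), (jk_spec a).1⟩ : {p : Fin 5 × Fin 5 // p.1 ≠ p.2})
  have h15 : 15 * (⨅ p : {p : Fin 5 × Fin 5 // p.1 ≠ p.2}, nu (G' p.1.1 p.1.2)) ≤ 4 * nu G := by
    refine le_trans ?_ key
    rw [← jkW_sum, Finset.sum_mul]
    exact Finset.sum_le_sum fun a _ => Nat.mul_le_mul_left _ (hle a)
  have hq : (15 : ℚ) * ((⨅ p : {p : Fin 5 × Fin 5 // p.1 ≠ p.2}, nu (G' p.1.1 p.1.2) : ℕ) : ℚ) ≤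
      4 * (nu G : ℚ) := by exact_mod_cast h15
  linarith

end CiDC
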